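/- arXiv:2511.18592 — 2 statements merged into one kernel-verified Lean document; each statement's English description precedes it below -/
import Mathlib

section
/- Explicit stream function for Kirchhoff elliptical vortices (Lemma on stream functions for Kirchhoff vortices, items 1–2). For every ξ > 0 there exists c^ξ ∈ ℝ such that for all ζ ≥ ξ and all η ∈ ℝ, writing e(ζ,η) = (sech(ξ) cosh(ζ) cos(η), sech(ξ) sinh(ζ) sin(η)), one has (1/2π)∫_{E^ξ} log‖e(ζ,η) − y‖ dy − Ω^ξ‖e(ζ,η)‖²/2 − c^ξ = (tanh(ξ)/4)·(2(ζ−ξ) − (cosh(2ζ) − cosh(2ξ))/e^{2ξ}) + (tanh(ξ)/4)·(e^{−2ζ} − e^{−2ξ})·cos(2η). In particular, taking ζ = ξ, the quantity (1/2π)∫_{E^ξ} log‖x−y‖ dy − Ω^ξ‖x‖²/2 − c^ξ vanishes for every x ∈ Σ^ξ. -/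
open MeasureTheory Real

noncomputable section

/-- The Euclidean plane. -/
abbrev Pt := EuclideanSpace ℝ (Fin 2)

/-- The point of the plane with the given coordinates. -/
def pt (a b : ℝ) : Pt := (WithLp.equiv 2 (Fin 2 → ℝ)).symm ![a, b]

/-- The open ellipse `E^ξ = {x : x₁² + (x₂ / tanh ξ)² < 1}`. -/
def Eell (ξ : ℝ) : Set Pt := {x : Pt | (x 0) ^ 2 + (x 1 / Real.tanh ξ) ^ 2 < 1}

/-- The angular velocity `Ω^ξ = tanh ξ / (1 + tanh ξ)²` of the `ξ`-Kirchhoff vortex. -/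
def Ωell (ξ : ℝ) : ℝ := Real.tanh ξ / (1 + Real.tanh ξ) ^ 2

/-- The elliptical coordinates map
`(ζ, η) ↦ (sech ξ · cosh ζ · cos η, sech ξ · sinh ζ · sin η)`. -/
def ept (ξ ζ η : ℝ) : Pt :=
  pt ((Real.cosh ξ)⁻¹ * Real.cosh ζ * Real.cos η)
    ((Real.cosh ξ)⁻¹ * Real.sinh ζ * Real.sin η)


lemma int_exp (m : ℤ) : ∫ t in (-π)..π, Complex.exp (m * t * Complex.I) = if m = 0 then 2 * (π : ℂ) else 0 := by
  split_ifs with h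
  · subst h
    simp
    ring
  · have hm : (m * Complex.I : ℂ) ≠ 0 := by simp [h]
    have := integral_exp_mul_complex (a := -π) (b := π) hm
    have e : ∀ t : ℝ, Complex.exp (m * t * Complex.I) = Complex.exp (m * Complex.I * t) := by
      intro t; congr 1; ring
    simp_rw [e]
    rw [this, div_eq_zero_iff]
    left
    rw [sub_eq_zero, Complex.exp_eq_exp_iff_exists_int]
    exact ⟨m, by push_cast; ring⟩

lemma int_exp_cos (n : ℕ) (A B : ℝ) : ∫ t in (-π)..π, Complex.exp (n * t * Complex.I) * (A + B * Real.cos (2 * t) : ℝ)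
    = if n = 0 then 2 * (π : ℂ) * A else if n = 2 then (π : ℂ) * B else 0 := by
  have e : ∀ t : ℝ, Complex.exp (n * t * Complex.I) * (A + B * Real.cos (2 * t) : ℝ) =
      A * Complex.exp ((n : ℤ) * t * Complex.I) + (B / 2) * Complex.exp ((n + 2 : ℤ) * t * Complex.I)
        + (B / 2) * Complex.exp ((n - 2 : ℤ) * t * Complex.I) := by
    intro t
    push_cast
    rw [show ((n + 2 : ℂ) * t * Complex.I) = n * t * Complex.I + 2 * t * Complex.I by ring,
      show ((n - 2 : ℂ) * t * Complex.I) = n * t * Complex.I + -(2 * t * Complex.I) by ring,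
      Complex.exp_add, Complex.exp_add, Complex.cos]
    rw [show -(2 * (t : ℂ)) * Complex.I = -(2 * t * Complex.I) by ring]
    ring
  have hc : ∀ (a : ℂ) (m : ℤ), IntervalIntegrable (fun t : ℝ => a * Complex.exp (m * t * Complex.I)) volume (-π) π :=
    fun a m => Continuous.intervalIntegrable (by fun_prop) _ _
  simp_rw [e]
  rw [intervalIntegral.integral_add ((hc _ _).add (hc _ _)) (hc _ _), intervalIntegral.integral_add (hc _ _) (hc _ _)]
  simp_rw [intervalIntegral.integral_const_mul, int_exp]
  rcases eq_or_ne n 0 with rfl | h0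
  · simp; ring
  · rcases eq_or_ne n 2 with rfl | h2
    · simp; ring
    · rw [if_neg (by exact_mod_cast h0), if_neg (by omega), if_neg (by omega), if_neg h0, if_neg h2]; simp

lemma one_sub_ne {u : ℂ} (hu : ‖u‖ < 1) (t : ℝ) : (1 - u * Complex.exp (t * Complex.I)) ∈ Complex.slitPlane := by
  rw [sub_eq_add_neg]
  apply Complex.mem_slitPlane_of_norm_lt_one
  simpa [Complex.norm_exp_ofReal_mul_I] using hu

lemma int_clog {u : ℂ} (hu : ‖u‖ < 1) (A B : ℝ) :
    ∫ t in (-π)..π, -Complex.log (1 - u * Complex.exp (t * Complex.I)) * (A + B * Real.cos (2 * t) : ℝ)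
      = π * B * (u ^ 2 / 2) := by
  have key : HasSum (fun n : ℕ => ∫ t in (-π)..π, (u * Complex.exp (t * Complex.I)) ^ n / n * (A + B * Real.cos (2 * t) : ℝ))
      (∫ t in (-π)..π, -Complex.log (1 - u * Complex.exp (t * Complex.I)) * (A + B * Real.cos (2 * t) : ℝ)) := by
    apply intervalIntegral.hasSum_integral_of_dominated_convergence (fun n _ => ‖u‖ ^ n * (|A| + |B|))
    · intro n
      apply Continuous.aestronglyMeasurable
      fun_prop
    · intro n
      refine Filter.Eventually.of_forall fun t _ => ?_
      rw [norm_mul]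
      gcongr
      · rw [norm_div, norm_pow, norm_mul, Complex.norm_exp_ofReal_mul_I, mul_one]
        rcases n with _ | n
        · simp
        · apply div_le_self (by positivity)
          rw [Complex.norm_natCast]; push_cast; linarith [(Nat.cast_nonneg n : (0:ℝ) ≤ n)]
      · rw [Complex.norm_real, Real.norm_eq_abs]
        refine (abs_add_le _ _).trans ?_
        rw [abs_mul]
        gcongr
        exact mul_le_of_le_one_right (abs_nonneg _) (abs_cos_le_one _)
    · refine Filter.Eventually.of_forall fun t _ => ?_
      exact (summable_geometric_of_lt_one (norm_nonneg _) hu).mul_right _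
    · simp
    · refine Filter.Eventually.of_forall fun t _ => ?_
      apply HasSum.mul_right
      apply Complex.hasSum_taylorSeries_neg_log
      simpa [Complex.norm_exp_ofReal_mul_I] using hu
  refine key.unique ?_
  have e : ∀ n : ℕ, ∫ t in (-π)..π, (u * Complex.exp (t * Complex.I)) ^ n / n * (A + B * Real.cos (2 * t) : ℝ)
      = if n = 2 then π * B * (u ^ 2 / 2) else 0 := by
    intro n
    have e2 : ∀ t : ℝ, (u * Complex.exp (t * Complex.I)) ^ n / n * (A + B * Real.cos (2 * t) : ℝ)
       = (u ^ n / n) * (Complex.exp (n * t * Complex.I) * (A + B * Real.cos (2 * t) : ℝ)) := by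
      intro t
      rw [mul_pow, ← Complex.exp_nat_mul]
      ring_nf
    simp_rw [e2]
    rw [intervalIntegral.integral_const_mul, int_exp_cos]
    rcases eq_or_ne n 0 with rfl | h0
    · simp
    · rcases eq_or_ne n 2 with rfl | h2
      · simp; ring
      · simp [h0, h2]
  simp_rw [e]
  exact hasSum_ite_eq 2 _

lemma cont_log {u : ℂ} (hu : ‖u‖ < 1) : Continuous fun t : ℝ => Complex.log (1 - u * Complex.exp (t * Complex.I)) :=
  Continuous.clog (by fun_prop) (one_sub_ne hu)

lemma int_rlog {u : ℂ} (hu : ‖u‖ < 1) (A B : ℝ) :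
    ∫ t in (-π)..π, Real.log ‖1 - u * Complex.exp (t * Complex.I)‖ * (A + B * Real.cos (2 * t))
      = - (π * B * ((u ^ 2).re / 2)) := by
  have h := congrArg Complex.re (int_clog hu A B)
  have hi : IntervalIntegrable (fun t : ℝ => -Complex.log (1 - u * Complex.exp (t * Complex.I)) * (A + B * Real.cos (2 * t) : ℝ)) volume (-π) π := by
    apply Continuous.intervalIntegrable
    have := cont_log hu
    fun_prop
  have h2 := intervalIntegral.intervalIntegral_re (𝕜 := ℂ) hi
  simp only [RCLike.re_to_complex] at h2
  rw [← h2] at h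
  have e : ∀ t : ℝ, (-Complex.log (1 - u * Complex.exp (t * Complex.I)) * (A + B * Real.cos (2 * t) : ℝ)).re =
     - (Real.log ‖1 - u * Complex.exp (t * Complex.I)‖ * (A + B * Real.cos (2 * t))) := by
    intro t
    rw [Complex.re_mul_ofReal, Complex.neg_re, Complex.log_re]; ring
  simp_rw [e] at h
  rw [intervalIntegral.integral_neg] at h
  rw [← neg_eq_iff_eq_neg, h]
  rw [← Complex.ofReal_mul, Complex.re_ofReal_mul, Complex.div_ofNat_re]

lemma abs_log_one_sub {u : ℂ} {r : ℝ} (hu : ‖u‖ ≤ r) (hr : r < 1) (t : ℝ) :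
    |Real.log ‖1 - u * Complex.exp (t * Complex.I)‖| ≤ Real.log 2 - Real.log ‖1 - r‖ := by
  have hn : ‖u * Complex.exp (t * Complex.I)‖ = ‖u‖ := by simp [Complex.norm_exp_ofReal_mul_I]
  have h1 : 1 - r ≤ ‖1 - u * Complex.exp (t * Complex.I)‖ := by
    have := norm_sub_norm_le (1 : ℂ) (u * Complex.exp (t * Complex.I))
    rw [hn, norm_one] at this; linarith
  have h2 : ‖1 - u * Complex.exp (t * Complex.I)‖ ≤ 2 := by
    have := norm_sub_le (1 : ℂ) (u * Complex.exp (t * Complex.I))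
    rw [hn, norm_one] at this; linarith
  have hr0 : 0 ≤ r := (norm_nonneg _).trans hu
  rw [Real.norm_of_nonneg (by linarith : (0:ℝ) ≤ 1 - r)]
  have l1 := Real.log_le_log (by linarith) h1
  have l2 := Real.log_le_log (by linarith) h2
  have l3 : Real.log (1 - r) ≤ 0 := Real.log_nonpos (by linarith) (by linarith)
  have l4 : 0 ≤ Real.log 2 := Real.log_nonneg (by norm_num)
  rw [abs_le]; constructor <;> linarith

lemma norm_exp_sub (s : ℝ) (w : ℂ) : ‖Complex.exp (s - w)‖ = Real.exp (s - w.re) := by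
  simp [Complex.norm_exp]

lemma log_factor (w : ℂ) (s t : ℝ) (h1 : s < w.re) (h2 : -s < w.re) :
    Real.log ‖Complex.cosh w - Complex.cosh (s + t * Complex.I)‖ =
      w.re - Real.log 2 + Real.log ‖1 - Complex.exp (s - w) * Complex.exp (t * Complex.I)‖
        + Real.log ‖1 - (starRingEnd ℂ) (Complex.exp ((-s : ℝ) - w)) * Complex.exp (t * Complex.I)‖ := by
  have hu1 : ‖Complex.exp (s - w)‖ < 1 := by rw [norm_exp_sub]; simpa using h1
  have hu2 : ‖(starRingEnd ℂ) (Complex.exp ((-s : ℝ) - w))‖ < 1 := by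
    rw [RCLike.norm_conj, norm_exp_sub]; rw [Real.exp_lt_one_iff]; linarith
  have n1 := Complex.slitPlane_ne_zero (one_sub_ne hu1 t)
  have n2 := Complex.slitPlane_ne_zero (one_sub_ne hu2 t)
  have e2 : ‖1 - (starRingEnd ℂ) (Complex.exp ((-s : ℝ) - w)) * Complex.exp (t * Complex.I)‖
     = ‖1 - Complex.exp (-s - w) * Complex.exp (-(t * Complex.I))‖ := by
    rw [← RCLike.norm_conj]
    simp [← Complex.exp_conj]
  have e : Complex.cosh w - Complex.cosh (s + t * Complex.I) =
     Complex.exp w / 2 * (1 - Complex.exp (s - w) * Complex.exp (t * Complex.I)) * 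
       (1 - Complex.exp (-s - w) * Complex.exp (-(t * Complex.I))) := by
    have hw := Complex.exp_ne_zero w
    have hs := Complex.exp_ne_zero (s : ℂ)
    have ht := Complex.exp_ne_zero (t * Complex.I)
    rw [Complex.cosh, Complex.cosh, neg_add, Complex.exp_add, Complex.exp_add, Complex.exp_sub, Complex.exp_sub]
    simp only [Complex.exp_neg]
    field_simp
    ring
  rw [e, norm_mul, norm_mul, ← e2, Real.log_mul, Real.log_mul, norm_div, Complex.norm_exp, Real.log_div, Real.log_exp]
  · simp
  · positivity
  · simp
  · simp [Complex.exp_ne_zero]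
  · simpa using n1
  · simp [Complex.exp_ne_zero]; simpa using n1
  · simpa using n2

lemma exp_sq_re (s : ℝ) (w : ℂ) : (Complex.exp (s - w) ^ 2).re = Real.exp (2 * s - 2 * w.re) * Real.cos (2 * w.im) := by
  rw [← Complex.exp_nat_mul, Complex.exp_re]
  simp [mul_sub]

lemma conj_exp_sq_re (s : ℝ) (w : ℂ) : ((starRingEnd ℂ) (Complex.exp (s - w)) ^ 2).re = Real.exp (2 * s - 2 * w.re) * Real.cos (2 * w.im) := by
  rw [← map_pow, Complex.conj_re, exp_sq_re]

lemma inner_int (K : ℝ) (w : ℂ) (s : ℝ) (h1 : s < w.re) (h2 : -s < w.re) :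
    ∫ t in (-π)..π, (K + Real.log ‖Complex.cosh w - Complex.cosh (s + t * Complex.I)‖)
       * (Real.cosh (2 * s) / 2 + (-1/2) * Real.cos (2 * t)) =
     π * Real.cosh (2 * s) * (K + w.re - Real.log 2 + Real.exp (-(2 * w.re)) * Real.cos (2 * w.im) / 2) := by
  have hu1 : ‖Complex.exp (s - w)‖ < 1 := by rw [norm_exp_sub]; simpa using h1
  have hu2 : ‖(starRingEnd ℂ) (Complex.exp ((-s : ℝ) - w))‖ < 1 := by
    rw [RCLike.norm_conj, norm_exp_sub]; rw [Real.exp_lt_one_iff]; linarith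
  have hc : ∀ {u : ℂ} (_ : ‖u‖ < 1), IntervalIntegrable (fun t : ℝ =>
     Real.log ‖1 - u * Complex.exp (t * Complex.I)‖ * (Real.cosh (2 * s) / 2 + (-1/2) * Real.cos (2 * t))) volume (-π) π := by
    intro u hu
    apply Continuous.intervalIntegrable
    refine Continuous.mul (Continuous.log (by fun_prop) ?_) (by fun_prop)
    intro t
    simpa using Complex.slitPlane_ne_zero (one_sub_ne hu t)
  have e : ∀ t : ℝ, (K + Real.log ‖Complex.cosh w - Complex.cosh (s + t * Complex.I)‖)
       * (Real.cosh (2 * s) / 2 + (-1/2) * Real.cos (2 * t)) = 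
       (K + w.re - Real.log 2) * (Real.cosh (2 * s) / 2 + (-1/2) * Real.cos (2 * t)) + 
       Real.log ‖1 - Complex.exp (s - w) * Complex.exp (t * Complex.I)‖ * (Real.cosh (2 * s) / 2 + (-1/2) * Real.cos (2 * t))
       + Real.log ‖1 - (starRingEnd ℂ) (Complex.exp ((-s : ℝ) - w)) * Complex.exp (t * Complex.I)‖ * (Real.cosh (2 * s) / 2 + (-1/2) * Real.cos (2 * t)) := by
    intro t
    rw [log_factor w s t h1 h2]; ring
  have i0 : IntervalIntegrable (fun t : ℝ => (K + w.re - Real.log 2) * (Real.cosh (2 * s) / 2 + (-1/2) * Real.cos (2 * t))) volume (-π) π :=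
    Continuous.intervalIntegrable (by fun_prop) _ _
  have j0 : ∫ t in (-π)..π, (Real.cosh (2 * s) / 2 + (-1/2) * Real.cos (2 * t)) = π * Real.cosh (2 * s) := by
    rw [intervalIntegral.integral_add (Continuous.intervalIntegrable (by fun_prop) _ _) (Continuous.intervalIntegrable (by fun_prop) _ _),
      intervalIntegral.integral_const_mul, intervalIntegral.integral_comp_mul_left _ (two_ne_zero)]
    simp
    ring
  simp_rw [e]
  rw [intervalIntegral.integral_add (i0.add (hc hu1)) (hc hu2), intervalIntegral.integral_add i0 (hc hu1), int_rlog hu1, int_rlog hu2,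
    exp_sq_re, conj_exp_sq_re, intervalIntegral.integral_const_mul, j0, Real.cosh_eq,
    show 2 * s - 2 * w.re = 2 * s + -(2 * w.re) by ring,
    show 2 * -s - 2 * w.re = -(2 * s) + -(2 * w.re) by ring, Real.exp_add, Real.exp_add]
  ring

lemma integrable_main (ξ K : ℝ) (hξ : 0 < ξ) (w : ℂ) (hw : ξ ≤ w.re) :
    IntegrableOn (fun p : ℝ × ℝ => (K + Real.log ‖Complex.cosh w - Complex.cosh (p.1 + p.2 * Complex.I)‖)
       * (Real.cosh (2 * p.1) / 2 + (-1/2) * Real.cos (2 * p.2))) (Set.Ioo 0 ξ ×ˢ Set.Ioo (-π) π) (volume.prod volume) := by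
  have hg : IntervalIntegrable (fun s : ℝ => Real.log ‖1 - Real.exp (s - ξ)‖) volume 0 ξ := by
    apply MeromorphicOn.intervalIntegrable_log_norm
    intro s _
    apply AnalyticAt.meromorphicAt
    fun_prop
  have hg1 : IntegrableOn (fun s : ℝ => ((|K| + |w.re - Real.log 2| + 2 * Real.log 2) + (-2) * Real.log ‖1 - Real.exp (s - ξ)‖) * (Real.cosh (2 * ξ) / 2 + 1 / 2)) (Set.Ioo 0 ξ) volume := by
    rw [intervalIntegrable_iff_integrableOn_Ioo_of_le hξ.le] at hg
    exact ((integrable_const _).add (hg.const_mul _)).mul_const _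
  have hg2 := Integrable.comp_fst hg1 (volume.restrict (Set.Ioo (-π) π))
  rw [IntegrableOn, ← Measure.prod_restrict]
  refine hg2.mono' ?_ ?_
  · apply Measurable.aestronglyMeasurable
    have : Measurable Complex.cosh := Complex.continuous_cosh.measurable
    have : Measurable Real.cosh := Real.continuous_cosh.measurable
    fun_prop
  · rw [Measure.prod_restrict]
    filter_upwards [ae_restrict_mem (measurableSet_Ioo.prod measurableSet_Ioo)] with p hp
    obtain ⟨⟨h0, h1⟩, -⟩ := hp
    rw [norm_mul, log_factor w p.1 p.2 (by linarith) (by linarith)]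
    have hr : Real.exp (p.1 - ξ) < 1 := by rw [Real.exp_lt_one_iff]; linarith
    have b1 := abs_log_one_sub (u := Complex.exp (p.1 - w)) (r := Real.exp (p.1 - ξ)) (by
      rw [norm_exp_sub]; gcongr) hr p.2
    have b2 := abs_log_one_sub (u := (starRingEnd ℂ) (Complex.exp ((-p.1 : ℝ) - w))) (r := Real.exp (p.1 - ξ)) (by
      rw [RCLike.norm_conj, norm_exp_sub]; gcongr; linarith) hr p.2
    have hA : ‖K + (w.re - Real.log 2 + Real.log ‖1 - Complex.exp (p.1 - w) * Complex.exp (p.2 * Complex.I)‖ +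
        Real.log ‖1 - (starRingEnd ℂ) (Complex.exp ((-p.1 : ℝ) - w)) * Complex.exp (p.2 * Complex.I)‖)‖ ≤
        (|K| + |w.re - Real.log 2| + 2 * Real.log 2) + (-2) * Real.log ‖1 - Real.exp (p.1 - ξ)‖ := by
      rw [Real.norm_eq_abs]
      refine (abs_add_le _ _).trans ?_
      have := abs_add_three (w.re - Real.log 2) (Real.log ‖1 - Complex.exp (p.1 - w) * Complex.exp (p.2 * Complex.I)‖)
        (Real.log ‖1 - (starRingEnd ℂ) (Complex.exp ((-p.1 : ℝ) - w)) * Complex.exp (p.2 * Complex.I)‖)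
      linarith
    refine mul_le_mul hA ?_ (norm_nonneg _) ((norm_nonneg _).trans hA)
    rw [Real.norm_eq_abs]
    refine (abs_add_le _ _).trans ?_
    have hch : Real.cosh (2 * p.1) ≤ Real.cosh (2 * ξ) := by
      rw [Real.cosh_le_cosh, abs_of_pos, abs_of_pos] <;> linarith
    have := abs_cos_le_one (2 * p.2)
    rw [abs_of_pos (by have := Real.cosh_pos (2 * p.1); linarith), abs_mul]
    norm_num
    linarith

lemma double_int (ξ K : ℝ) (hξ : 0 < ξ) (w : ℂ) (hw : ξ ≤ w.re) :
    ∫ p in (Set.Ioo 0 ξ ×ˢ Set.Ioo (-π) π : Set (ℝ × ℝ)), (K + Real.log ‖Complex.cosh w - Complex.cosh (p.1 + p.2 * Complex.I)‖)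
       * (Real.cosh (2 * p.1) / 2 + (-1/2) * Real.cos (2 * p.2)) = 
     π * (Real.sinh (2 * ξ) / 2) * (K + w.re - Real.log 2 + Real.exp (-(2 * w.re)) * Real.cos (2 * w.im) / 2) := by
  rw [Measure.volume_eq_prod, setIntegral_prod _ (integrable_main ξ K hξ w hw)]
  have : ∀ s ∈ Set.Ioo 0 ξ, ∫ t in Set.Ioo (-π) π, (K + Real.log ‖Complex.cosh w - Complex.cosh (s + t * Complex.I)‖)
       * (Real.cosh (2 * s) / 2 + (-1/2) * Real.cos (2 * t)) = 
       Real.cosh (2 * s) * (π * (K + w.re - Real.log 2 + Real.exp (-(2 * w.re)) * Real.cos (2 * w.im) / 2)) := by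
    intro s hs
    rw [← integral_Ioc_eq_integral_Ioo, ← intervalIntegral.integral_of_le (by linarith [pi_pos]),
      inner_int K w s (by linarith [hs.2]) (by linarith [hs.1, hs.2])]
    ring
  rw [setIntegral_congr_fun measurableSet_Ioo this, integral_mul_const, ← integral_Ioc_eq_integral_Ioo,
    ← intervalIntegral.integral_of_le hξ.le, intervalIntegral.integral_comp_mul_left _ two_ne_zero]
  have : ∫ x in (2 * 0 : ℝ)..(2 * ξ), Real.cosh x = Real.sinh (2 * ξ) := by
    rw [intervalIntegral.integral_eq_sub_of_hasDerivAt (fun x _ => Real.hasDerivAt_sinh x) (Real.continuous_cosh.intervalIntegrable _ _)]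
    simp
  rw [this, smul_eq_mul]
  ring

lemma cosh_re' (v : ℂ) : (Complex.cosh v).re = Real.cosh v.re * Real.cos v.im := by
  conv_lhs => rw [← Complex.re_add_im v]
  rw [Complex.cosh_add, Complex.cosh_mul_I, Complex.sinh_mul_I, ← Complex.ofReal_cosh, ← Complex.ofReal_sinh,
    ← Complex.ofReal_cos, ← Complex.ofReal_sin]
  simp [-Complex.ofReal_cosh, -Complex.ofReal_sinh, -Complex.ofReal_cos, -Complex.ofReal_sin]

lemma cosh_im' (v : ℂ) : (Complex.cosh v).im = Real.sinh v.re * Real.sin v.im := by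
  conv_lhs => rw [← Complex.re_add_im v]
  rw [Complex.cosh_add, Complex.cosh_mul_I, Complex.sinh_mul_I, ← Complex.ofReal_cosh, ← Complex.ofReal_sinh,
    ← Complex.ofReal_cos, ← Complex.ofReal_sin]
  simp [-Complex.ofReal_cosh, -Complex.ofReal_sinh, -Complex.ofReal_cos, -Complex.ofReal_sin]

lemma norm_sinh_sq (v : ℂ) : ‖Complex.sinh v‖ ^ 2 = Real.cosh (2 * v.re) / 2 + (-1/2) * Real.cos (2 * v.im) := by
  conv_lhs => rw [← Complex.re_add_im v]
  rw [Complex.sinh_add, Complex.cosh_mul_I, Complex.sinh_mul_I, ← Complex.ofReal_cosh, ← Complex.ofReal_sinh,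
    ← Complex.ofReal_cos, ← Complex.ofReal_sin, ← Complex.normSq_eq_norm_sq, Complex.normSq_apply]
  simp [-Complex.ofReal_cosh, -Complex.ofReal_sinh, -Complex.ofReal_cos, -Complex.ofReal_sin]
  rw [Real.cosh_two_mul, Real.cos_two_mul]
  have h1 := Real.cosh_sq v.re
  have h2 := Real.sin_sq_add_cos_sq v.im
  have h3 : Real.sin v.im ^ 2 = 1 - Real.cos v.im ^ 2 := by linarith
  calc _ = Real.sinh v.re ^ 2 * Real.cos v.im ^ 2 + Real.cosh v.re ^ 2 * Real.sin v.im ^ 2 := by ring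
    _ = _ := by rw [h1, h3]; ring

lemma cosh_inj (ξ : ℝ) : Set.InjOn Complex.cosh (Set.Ioo 0 ξ ×ℂ Set.Ioo (-π) π) := by
  intro v hv v' hv' h
  rw [Complex.mem_reProdIm] at hv hv'
  rw [← Complex.cos_mul_I, ← Complex.cos_mul_I, Complex.cos_eq_cos_iff] at h
  obtain ⟨k, h | h⟩ := h
  · have hre := congrArg Complex.re h
    have him := congrArg Complex.im h
    simp at hre him
    have hk : k = 0 := by
      have hp := pi_pos
      have h1 : (k : ℝ) < 1 := by
        by_contra hh; push Not at hh
        nlinarith [hv.2.1, hv.2.2, hv'.2.1, hv'.2.2]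
      have h2 : (-1 : ℝ) < k := by
        by_contra hh; push Not at hh
        nlinarith [hv.2.1, hv.2.2, hv'.2.1, hv'.2.2]
      have h1' : k < 1 := by exact_mod_cast h1
      have h2' : -1 < k := by exact_mod_cast h2
      omega
    subst hk
    apply Complex.ext
    · exact him.symm
    · simpa using hre.symm
  · have him := congrArg Complex.im h
    simp at him
    linarith [hv.1.1, hv'.1.1]

lemma ell_lt {ξ s t : ℝ} (hξ : 0 < ξ) (hs : 0 ≤ s) :
    ((Real.cosh ξ)⁻¹ * (Real.cosh s * Real.cos t)) ^ 2 + ((Real.cosh ξ)⁻¹ * (Real.sinh s * Real.sin t) / Real.tanh ξ) ^ 2 < 1 ↔ s < ξ := by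
  have hc := Real.cosh_pos ξ
  have hsh : 0 < Real.sinh ξ := Real.sinh_pos_iff.2 hξ
  have e : ((Real.cosh ξ)⁻¹ * (Real.cosh s * Real.cos t)) ^ 2 + ((Real.cosh ξ)⁻¹ * (Real.sinh s * Real.sin t) / Real.tanh ξ) ^ 2
    = (Real.cosh s / Real.cosh ξ) ^ 2 * Real.cos t ^ 2 + (Real.sinh s / Real.sinh ξ) ^ 2 * Real.sin t ^ 2 := by
    rw [Real.tanh_eq_sinh_div_cosh]; field_simp
  have hcs := Real.cos_sq_add_sin_sq t
  have hcos : Real.cos t ^ 2 = 1 - Real.sin t ^ 2 := by linarith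
  have q1 := sq_nonneg (Real.cos t)
  have q2 := sq_nonneg (Real.sin t)
  have hss : 0 ≤ Real.sinh s := Real.sinh_nonneg_iff.2 hs
  have hcc := Real.cosh_pos s
  rw [e]
  constructor
  · intro h
    by_contra hh; push Not at hh
    have a1 : 1 ≤ (Real.cosh s / Real.cosh ξ) ^ 2 := by
      apply one_le_pow₀; rw [one_le_div hc, Real.cosh_le_cosh, abs_of_pos hξ, abs_of_nonneg hs]; exact hh
    have a2 : 1 ≤ (Real.sinh s / Real.sinh ξ) ^ 2 := by
      apply one_le_pow₀; rw [one_le_div hsh, Real.sinh_le_sinh]; exact hh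
    nlinarith
  · intro h
    have a1 : (Real.cosh s / Real.cosh ξ) ^ 2 < 1 := by
      apply pow_lt_one₀ (by positivity) _ two_ne_zero; rw [div_lt_one hc, Real.cosh_lt_cosh, abs_of_pos hξ, abs_of_nonneg hs]; exact h
    have a2 : (Real.sinh s / Real.sinh ξ) ^ 2 < 1 := by
      apply pow_lt_one₀ (by positivity) _ two_ne_zero; rw [div_lt_one hsh, Real.sinh_lt_sinh]; exact h
    rw [hcos]
    rcases eq_or_lt_of_le q2 with h0 | h0
    · rw [← h0]; linarith
    · nlinarith

/-- cosh hits every point off the real axis, from the half-strip. -/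
lemma cosh_surj (z : ℂ) (hz : z.im ≠ 0) : ∃ v : ℂ, 0 < v.re ∧ v.im ∈ Set.Ioo (-π) π ∧ Complex.cosh v = z := by
  obtain ⟨x, hx⟩ := Complex.cos_surjective z
  have h1 : ∃ v : ℂ, 0 ≤ v.re ∧ Complex.cosh v = z := by
    rcases le_total 0 (x * Complex.I).re with h | h
    · exact ⟨x * Complex.I, h, by rw [Complex.cosh_mul_I, hx]⟩
    · exact ⟨-(x * Complex.I), by rw [Complex.neg_re]; linarith, by rw [Complex.cosh_neg, Complex.cosh_mul_I, hx]⟩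
  obtain ⟨v, hv, hvz⟩ := h1
  have hre : z.re = Real.cosh v.re * Real.cos v.im := by rw [← hvz, cosh_re']
  have him : z.im = Real.sinh v.re * Real.sin v.im := by rw [← hvz, cosh_im']
  have hpos : 0 < v.re := by
    rcases hv.eq_or_lt with h | h
    · exfalso; apply hz; rw [him, ← h]; simp
    · exact h
  set θ := toIocMod (two_pi_pos) (-π) v.im with hθ
  have hmem := toIocMod_mem_Ioc two_pi_pos (-π) v.im
  rw [← hθ] at hmem
  have hθ2 : θ = v.im - (toIocDiv two_pi_pos (-π) v.im : ℤ) * (2 * π) := by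
    rw [hθ, toIocMod, zsmul_eq_mul]
  have hcos : Real.cos θ = Real.cos v.im := by rw [hθ2, Real.cos_sub_int_mul_two_pi]
  have hsin : Real.sin θ = Real.sin v.im := by rw [hθ2, Real.sin_sub_int_mul_two_pi]
  have hne : θ ≠ π := by
    intro h
    apply hz; rw [him, ← hsin, h]; simp
  refine ⟨⟨v.re, θ⟩, hpos, ⟨hmem.1, lt_of_le_of_ne (by linarith [hmem.2]) hne⟩, ?_⟩
  apply Complex.ext
  · rw [cosh_re', hre]; simp [hcos]
  · rw [cosh_im', him]; simp [hsin]

lemma det_smul_one (a : ℂ) : (a • (1 : ℂ →L[ℝ] ℂ)).det = ‖a‖ ^ 2 := by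
  rw [ContinuousLinearMap.det, ← LinearMap.det_toMatrix Complex.basisOneI, Matrix.det_fin_two]
  simp [LinearMap.toMatrix_apply]
  rw [← Complex.normSq_eq_norm_sq, Complex.normSq_apply]

lemma image_ae (ξ : ℝ) (hξ : 0 < ξ) :
    ((fun v : ℂ => ((Real.cosh ξ)⁻¹ : ℝ) * Complex.cosh v) '' (Set.Ioo 0 ξ ×ℂ Set.Ioo (-π) π)) =ᵐ[volume]
      {z : ℂ | z.re ^ 2 + (z.im / Real.tanh ξ) ^ 2 < 1} := by
  have hc := Real.cosh_pos ξ
  have hnull : ∀ᵐ z : ℂ, z.im ≠ 0 := by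
    have h0 : ∀ᵐ y : ℝ, y ≠ 0 := by simp [ae_iff]
    have h1 : ∀ᵐ p : ℝ × ℝ, p.2 ≠ 0 := Measure.quasiMeasurePreserving_snd.ae h0
    exact Complex.volume_preserving_equiv_real_prod.quasiMeasurePreserving.ae h1
  filter_upwards [hnull] with z hz
  apply propext
  constructor
  · rintro ⟨v, hv, rfl⟩
    rw [Complex.mem_reProdIm] at hv
    show (_ : ℝ) ^ 2 + _ < 1
    rw [Complex.re_ofReal_mul, Complex.im_ofReal_mul, cosh_re', cosh_im']
    exact (ell_lt hξ hv.1.1.le).2 hv.1.2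
  · intro h
    obtain ⟨v, h0, hi, hv⟩ := cosh_surj ((Real.cosh ξ : ℝ) * z) (by
      rw [Complex.im_ofReal_mul]; exact mul_ne_zero hc.ne' hz)
    have hzv : ((Real.cosh ξ)⁻¹ : ℝ) * Complex.cosh v = z := by
      rw [hv, ← mul_assoc, ← Complex.ofReal_mul, inv_mul_cancel₀ hc.ne']; simp
    refine ⟨v, ?_, hzv⟩
    rw [Complex.mem_reProdIm]
    refine ⟨⟨h0, ?_⟩, hi⟩
    rw [← hzv] at h
    change (_ : ℝ) ^ 2 + _ < 1 at h
    rw [Complex.re_ofReal_mul, Complex.im_ofReal_mul, cosh_re', cosh_im'] at h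
    exact (ell_lt hξ h0.le).1 h

lemma complex_int (ξ : ℝ) (hξ : 0 < ξ) (w : ℂ) (hw : ξ ≤ w.re) :
    ∫ z in {z : ℂ | z.re ^ 2 + (z.im / Real.tanh ξ) ^ 2 < 1}, Real.log ‖((Real.cosh ξ)⁻¹ : ℝ) * Complex.cosh w - z‖
     = π * Real.tanh ξ * (Real.log (Real.cosh ξ)⁻¹ + w.re - Real.log 2 + Real.exp (-(2 * w.re)) * Real.cos (2 * w.im) / 2) := by
  have hc := Real.cosh_pos ξ
  have hS : MeasurableSet (Set.Ioo 0 ξ ×ℂ Set.Ioo (-π) π) := (isOpen_Ioo.reProdIm isOpen_Ioo).measurableSet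
  rw [← setIntegral_congr_set (image_ae ξ hξ)]
  rw [integral_image_eq_integral_abs_det_fderiv_smul volume hS
    (f' := fun v => (((Real.cosh ξ)⁻¹ : ℝ) * Complex.sinh v) • (1 : ℂ →L[ℝ] ℂ))
    (fun v _ => (((Complex.hasDerivAt_cosh v).const_mul _).complexToReal_fderiv).hasFDerivWithinAt)
    (fun v hv v' hv' h => cosh_inj ξ hv hv' (by
      have : (((Real.cosh ξ)⁻¹ : ℝ) : ℂ) ≠ 0 := by exact_mod_cast (inv_ne_zero hc.ne')
      exact mul_left_cancel₀ this h))]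
  rw [← (Complex.volume_preserving_equiv_real_prod.symm).setIntegral_preimage_emb
    Complex.measurableEquivRealProd.symm.measurableEmbedding]
  have hpre : Complex.measurableEquivRealProd.symm ⁻¹' (Set.Ioo 0 ξ ×ℂ Set.Ioo (-π) π) = (Set.Ioo 0 ξ ×ˢ Set.Ioo (-π) π : Set (ℝ × ℝ)) := by
    ext p; simp [Complex.mem_reProdIm, Complex.measurableEquivRealProd_symm_apply]
  rw [hpre]
  have e : ∀ p ∈ (Set.Ioo 0 ξ ×ˢ Set.Ioo (-π) π : Set (ℝ × ℝ)),
     |((((Real.cosh ξ)⁻¹ : ℝ) * Complex.sinh (Complex.measurableEquivRealProd.symm p)) • (1 : ℂ →L[ℝ] ℂ)).det| •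
      Real.log ‖((Real.cosh ξ)⁻¹ : ℝ) * Complex.cosh w - ((Real.cosh ξ)⁻¹ : ℝ) * Complex.cosh (Complex.measurableEquivRealProd.symm p)‖
      = (Real.cosh ξ)⁻¹ ^ 2 * ((Real.log (Real.cosh ξ)⁻¹ + Real.log ‖Complex.cosh w - Complex.cosh (p.1 + p.2 * Complex.I)‖)
       * (Real.cosh (2 * p.1) / 2 + (-1/2) * Real.cos (2 * p.2))) := by
    intro p hp
    obtain ⟨⟨h0, h1⟩, -⟩ := hp
    have hsym : Complex.measurableEquivRealProd.symm p = p.1 + p.2 * Complex.I := by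
      rw [Complex.measurableEquivRealProd_symm_apply]; exact Complex.mk_eq_add_mul_I _ _
    have hne : ‖Complex.cosh w - Complex.cosh (p.1 + p.2 * Complex.I)‖ ≠ 0 := by
      rw [norm_ne_zero_iff, sub_ne_zero]
      intro heq
      rw [← Complex.cos_mul_I, ← Complex.cos_mul_I, Complex.cos_eq_cos_iff] at heq
      obtain ⟨k, h | h⟩ := heq
      · have him := congrArg Complex.im h
        simp at him
        linarith
      · have him := congrArg Complex.im h
        simp at him
        linarith
    rw [hsym, det_smul_one, norm_mul, mul_pow, norm_sinh_sq, ← mul_sub, norm_mul, Complex.norm_real, 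
      Real.norm_of_nonneg (inv_pos.2 hc).le, Real.log_mul (inv_pos.2 hc).ne' hne, abs_of_nonneg, smul_eq_mul]
    · simp; ring
    · rw [← norm_sinh_sq]; positivity
  rw [setIntegral_congr_fun (measurableSet_Ioo.prod measurableSet_Ioo) e, integral_const_mul, double_int ξ _ hξ w hw,
    Real.sinh_two_mul, Real.tanh_eq_sinh_div_cosh]
  field_simp

lemma ept_eq (ξ ζ η : ℝ) : ept ξ ζ η =
    Complex.orthonormalBasisOneI.repr (((Real.cosh ξ)⁻¹ : ℝ) * Complex.cosh (ζ + η * Complex.I)) := by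
  have h : ∀ z : ℂ, Complex.orthonormalBasisOneI.repr z = pt z.re z.im := by
    intro z
    ext i
    rw [Complex.orthonormalBasisOneI_repr_apply]
    fin_cases i <;> simp [pt]
  rw [h, Complex.re_ofReal_mul, Complex.im_ofReal_mul, cosh_re', cosh_im', ept]
  simp [mul_assoc]

lemma plane_int (ξ : ℝ) (hξ : 0 < ξ) (ζ η : ℝ) (hζ : ξ ≤ ζ) :
    ∫ y in Eell ξ, Real.log ‖ept ξ ζ η - y‖
     = π * Real.tanh ξ * (Real.log (Real.cosh ξ)⁻¹ + ζ - Real.log 2 + Real.exp (-(2 * ζ)) * Real.cos (2 * η) / 2) := by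
  rw [← (Complex.orthonormalBasisOneI.measurePreserving_repr).setIntegral_preimage_emb
    (Complex.orthonormalBasisOneI.repr.toHomeomorph.measurableEmbedding)]
  have hpre : Complex.orthonormalBasisOneI.repr ⁻¹' (Eell ξ) = {z : ℂ | z.re ^ 2 + (z.im / Real.tanh ξ) ^ 2 < 1} := by
    ext z
    simp [Eell]
  rw [hpre, ept_eq]
  simp_rw [← map_sub, LinearIsometryEquiv.norm_map]
  have := complex_int ξ hξ (ζ + η * Complex.I) (by simpa using hζ)
  simpa using this

lemma omega_eq (ξ ζ η : ℝ) : Ωell ξ * ‖ept ξ ζ η‖ ^ 2 / 2 =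
    Real.tanh ξ / 4 * (Real.exp (2 * ξ))⁻¹ * (Real.cosh (2 * ζ) + Real.cos (2 * η)) := by
  have hc := Real.cosh_pos ξ
  have h1 : ‖ept ξ ζ η‖ ^ 2 = (Real.cosh ξ)⁻¹ ^ 2 * ((Real.cosh (2 * ζ) + Real.cos (2 * η)) / 2) := by
    rw [EuclideanSpace.norm_sq_eq]
    simp [ept, pt]
    have q1 := Real.cosh_sq ζ
    have q2 : Real.sin η ^ 2 = 1 - Real.cos η ^ 2 := by linarith [Real.sin_sq_add_cos_sq η]
    rw [Real.cosh_two_mul, Real.cos_two_mul, mul_pow, mul_pow, mul_pow, mul_pow, q1, q2]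
    ring
  have h2 : Ωell ξ * (Real.cosh ξ)⁻¹ ^ 2 = Real.tanh ξ * (Real.exp (2 * ξ))⁻¹ := by
    have : 1 + Real.tanh ξ = Real.exp ξ * (Real.cosh ξ)⁻¹ := by
      rw [Real.tanh_eq_sinh_div_cosh, ← Real.cosh_add_sinh]; field_simp
    rw [Ωell, this, two_mul, Real.exp_add]
    have := Real.exp_pos ξ
    field_simp
  rw [h1, ← mul_assoc, h2]; ring

lemma frontier_param (ξ : ℝ) (hξ : 0 < ξ) (x : Pt) (hx : x ∈ frontier (Eell ξ)) : ∃ η, x = ept ξ ξ η := by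
  have hc := Real.cosh_pos ξ
  have hsh : 0 < Real.sinh ξ := Real.sinh_pos_iff.2 hξ
  have hcont : Continuous fun x : Pt => (x 0) ^ 2 + (x 1 / Real.tanh ξ) ^ 2 := by fun_prop
  have h : (x 0) ^ 2 + (x 1 / Real.tanh ξ) ^ 2 = 1 := frontier_lt_subset_eq hcont continuous_const hx
  have hn : ‖(⟨x 0, x 1 / Real.tanh ξ⟩ : ℂ)‖ = 1 := by
    rw [← sq_eq_sq₀ (norm_nonneg _) zero_le_one, ← Complex.normSq_eq_norm_sq, Complex.normSq_apply]
    linarith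
  refine ⟨Complex.arg ⟨x 0, x 1 / Real.tanh ξ⟩, ?_⟩
  have h1 := Complex.norm_mul_cos_arg ⟨x 0, x 1 / Real.tanh ξ⟩
  have h2 := Complex.norm_mul_sin_arg ⟨x 0, x 1 / Real.tanh ξ⟩
  rw [hn, one_mul] at h1 h2
  rw [ept, h1, h2, Real.tanh_eq_sinh_div_cosh]
  ext i
  fin_cases i
  · simp [pt, hc.ne']
  · simp [pt]
    field_simp

/-- **Explicit stream function for Kirchhoff elliptical vortices** (Lemma on
stream functions for Kirchhoff vortices, items 1–2). -/
theorem kirchhoff_stream_function_formula (ξ : ℝ) (hξ : 0 < ξ) :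
    ∃ cξ : ℝ,
      (∀ ζ η : ℝ, ξ ≤ ζ →
        (1 / (2 * π)) * (∫ y in Eell ξ, Real.log ‖ept ξ ζ η - y‖) -
            Ωell ξ * ‖ept ξ ζ η‖ ^ 2 / 2 - cξ =
          (Real.tanh ξ / 4) *
              (2 * (ζ - ξ) - (Real.cosh (2 * ζ) - Real.cosh (2 * ξ)) / Real.exp (2 * ξ)) +
            (Real.tanh ξ / 4) * (Real.exp (-(2 * ζ)) - Real.exp (-(2 * ξ))) *
              Real.cos (2 * η)) ∧
      ∀ x ∈ frontier (Eell ξ),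
        (1 / (2 * π)) * (∫ y in Eell ξ, Real.log ‖x - y‖) -
          Ωell ξ * ‖x‖ ^ 2 / 2 - cξ = 0 := by
  refine ⟨Real.tanh ξ / 2 * (Real.log (Real.cosh ξ)⁻¹ - Real.log 2 + ξ)
    - Real.tanh ξ / 4 * (Real.exp (2 * ξ))⁻¹ * Real.cosh (2 * ξ), ?_⟩
  refine (fun h1 => ⟨h1, ?_⟩) ?_
  · intro ζ η hζ
    have hp := pi_pos
    have e : ∀ X : ℝ, 1 / (2 * π) * (π * Real.tanh ξ * X) = Real.tanh ξ / 2 * X := by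
      intro X; field_simp
    rw [plane_int ξ hξ ζ η hζ, omega_eq, e, Real.exp_neg (2 * ξ)]
    ring
  · intro x hx
    obtain ⟨η, rfl⟩ := frontier_param ξ hξ x hx
    rw [h1 ξ η le_rfl]
    simp
end
end

section
/- Normal derivative of the Kirchhoff stream function (Lemma on stream functions for Kirchhoff vortices, item 3). Fix ξ > 0 and define Ψ^ξ : ℝ² → ℝ by Ψ^ξ(x) = (1/2π)∫_{E^ξ} log‖x−y‖ dy − Ω^ξ‖x‖²/2. Then for every η ∈ ℝ the function ζ ↦ Ψ^ξ(sech(ξ) cosh(ζ) cos(η), sech(ξ) sinh(ζ) sin(η)) is differentiable at ζ = ξ with derivative equal to tanh(ξ)/(2e^{2ξ})·(cosh(2ξ) − cos(2η)), which is strictly positive; consequently inf_{x ∈ Σ^ξ} ‖∇Ψ^ξ(x)‖ > 0. -/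
open MeasureTheory Real

noncomputable section

/-- The relative stream function of the `ξ`-Kirchhoff vortex (without the
additive normalization constant). -/
def Ψell (ξ : ℝ) (x : Pt) : ℝ :=
  (1 / (2 * π)) * (∫ y in Eell ξ, Real.log ‖x - y‖) - Ωell ξ * ‖x‖ ^ 2 / 2

lemma kv_intOn_log (x : Pt) (R : ℝ) :
    IntegrableOn (fun y : Pt => Real.log ‖x - y‖) (Metric.ball x R) := by
  have h0 : IntegrableOn (fun y : Pt => Real.log ‖y‖) (Metric.ball 0 R) := by
    rw [MeasureTheory.integrableOn_fun_norm_addHaar volume (f := Real.log)]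
    have h2 : Module.finrank ℝ Pt - 1 = 1 := by simp [Pt]
    rw [h2]
    have hc : Continuous (fun y : ℝ => y ^ 1 • Real.log y) := by
      simpa using Real.continuous_mul_log
    exact (hc.integrableOn_Icc (a := 0) (b := R)).mono_set Set.Ioo_subset_Icc_self
  have h := (Measure.measurePreserving_sub_left (volume : Measure Pt) x).integrableOn_comp_preimage
    (Homeomorph.subLeft x).measurableEmbedding (f := fun y : Pt => Real.log ‖y‖)
    (s := Metric.ball 0 R)
  have h3 := h.2 h0
  have hset : Metric.ball x R = (fun t => x - t) ⁻¹' Metric.ball 0 R := by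
    ext y
    simp [dist_eq_norm, norm_sub_rev]
  rw [hset]
  exact h3

/-- cartesian coordinates as a measurable equivalence -/
def kvEquiv : Pt ≃ᵐ ℝ × ℝ :=
  (MeasurableEquiv.toLp 2 (Fin 2 → ℝ)).symm.trans MeasurableEquiv.finTwoArrow

lemma kvEquiv_apply (x : Pt) : kvEquiv x = (x 0, x 1) := rfl

lemma kvEquiv_mp : MeasurePreserving kvEquiv :=
  (volume_preserving_finTwoArrow ℝ).comp
    (EuclideanSpace.volume_preserving_symm_measurableEquiv_toLp (Fin 2))

lemma kv_norm (x y : Pt) : ‖x - y‖ = ‖(⟨x 0, x 1⟩ : ℂ) - ⟨y 0, y 1⟩‖ := by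
  rw [EuclideanSpace.norm_eq, Complex.norm_def, Complex.normSq_apply]
  simp [Fin.sum_univ_two, sq]

/-- the ellipse in the product plane -/
def kvE (b : ℝ) : Set (ℝ × ℝ) := {p | p.1 ^ 2 + (p.2 / b) ^ 2 < 1}

/-- elliptic polar coordinates -/
def kvG (b : ℝ) (p : ℝ × ℝ) : ℝ × ℝ := (p.1 * Real.cos p.2, b * (p.1 * Real.sin p.2))

/-- scaling of the second coordinate -/
def kvD (b : ℝ) : ℝ × ℝ →L[ℝ] ℝ × ℝ :=
  (Matrix.toLin (.finTwoProd ℝ) (.finTwoProd ℝ) !![1, 0; 0, b]).toContinuousLinearMap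

lemma kvD_apply (b : ℝ) (p : ℝ × ℝ) : kvD b p = (p.1, b * p.2) := by
  simp [kvD, Matrix.toLin_finTwoProd_toContinuousLinearMap]

lemma kvD_det (b : ℝ) : (kvD b).det = b := by
  simp [kvD, LinearMap.det_toContinuousLinearMap, LinearMap.det_toLin]

lemma kvG_eq (b : ℝ) (p : ℝ × ℝ) : kvG b p = kvD b (polarCoord.symm p) := by
  rw [kvD_apply]; rfl

lemma kvG_deriv (b : ℝ) (p : ℝ × ℝ) :
    HasFDerivAt (kvG b) ((kvD b).comp (fderivPolarCoordSymm p)) p := by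
  have h : kvG b = fun p => kvD b (polarCoord.symm p) := funext (kvG_eq b)
  rw [h]
  exact (kvD b).hasFDerivAt.comp p (hasFDerivAt_polarCoord_symm p)

lemma kvG_det (b : ℝ) (p : ℝ × ℝ) :
    ((kvD b).comp (fderivPolarCoordSymm p)).det = b * p.1 := by
  have : ((kvD b).comp (fderivPolarCoordSymm p)).det
    = (kvD b).det * (fderivPolarCoordSymm p).det := LinearMap.det_comp _ _
  rw [this, kvD_det, det_fderivPolarCoordSymm]

/-- polar rectangle -/
def kvS : Set (ℝ × ℝ) := Set.Ioo (0:ℝ) 1 ×ˢ Set.Ioo (-π) π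

lemma kvS_sub : kvS ⊆ polarCoord.target := by
  intro p hp
  exact ⟨hp.1.1, hp.2⟩

lemma kvG_inj (b : ℝ) (hb : 0 < b) : Set.InjOn (kvG b) kvS := by
  intro p hp q hq h
  rw [kvG_eq, kvG_eq, kvD_apply, kvD_apply] at h
  simp only [Prod.mk.injEq, mul_eq_mul_left_iff, hb.ne', or_false] at h
  exact polarCoord.symm.injOn (kvS_sub hp) (kvS_sub hq) (Prod.ext h.1 h.2)

lemma kvG_image (b : ℝ) (hb : 0 < b) : kvG b '' kvS =ᵐ[volume] kvE b := by
  have hsub : kvG b '' kvS ⊆ kvE b := by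
    rintro _ ⟨p, hp, rfl⟩
    have h1 : b * (p.1 * Real.sin p.2) / b = p.1 * Real.sin p.2 := by field_simp
    simp only [kvE, kvG, Set.mem_ofPred_eq, h1]
    have := Real.sin_sq_add_cos_sq p.2
    have h2 := hp.1.1
    have h3 := hp.1.2
    have : (p.1 * Real.cos p.2) ^ 2 + (p.1 * Real.sin p.2) ^ 2 = p.1 ^ 2 := by
      linear_combination p.1 ^ 2 * this
    rw [this]
    nlinarith
  have hdiff : kvE b \ (kvG b '' kvS) ⊆ (LinearMap.ker (LinearMap.snd ℝ ℝ ℝ) : Set (ℝ × ℝ)) := by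
    rintro q ⟨hq, hq2⟩
    by_contra h
    apply hq2
    have hne : q.2 ≠ 0 := h
    have hs : ((q.1, q.2 / b) : ℝ × ℝ) ∈ polarCoord.source := by
      right
      simp [hne, hb.ne']
    have ht := polarCoord.map_source hs
    refine ⟨polarCoord (q.1, q.2 / b), ⟨⟨ht.1, ?_⟩, ht.2⟩, ?_⟩
    · simp only [polarCoord_apply]
      rw [Real.sqrt_lt' one_pos]
      simpa [kvE] using hq
    · rw [kvG_eq, polarCoord.left_inv hs, kvD_apply]
      ext <;> simp
      field_simp
  have hB : volume (LinearMap.ker (LinearMap.snd ℝ ℝ ℝ) : Set (ℝ × ℝ)) = 0 := by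
    apply Measure.addHaar_submodule
    rw [Ne, LinearMap.ker_eq_top]
    intro h
    have : (LinearMap.snd ℝ ℝ ℝ) (0, 1) = (0 : ℝ × ℝ →ₗ[ℝ] ℝ) (0, 1) := by rw [h]
    simp at this
  refine Filter.EventuallyLE.antisymm hsub.eventuallyLE ?_
  rw [ae_le_set]
  exact measure_mono_null hdiff hB

lemma kv_integral (ξ : ℝ) (hξ : 0 < ξ) (x : Pt) :
    ∫ y in Eell ξ, Real.log ‖x - y‖ =
      ∫ r in Set.Ioo (0:ℝ) 1, ∫ θ in Set.Ioo (-π) π, (Real.tanh ξ * r) *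
        Real.log ‖(⟨x 0, x 1⟩ : ℂ) - ⟨r * Real.cos θ, Real.tanh ξ * (r * Real.sin θ)⟩‖ := by
  set b := Real.tanh ξ with hbdef
  have hb : 0 < b := by
    rw [hbdef, Real.tanh_eq_sinh_div_cosh]
    exact div_pos (Real.sinh_pos_iff.2 hξ) (Real.cosh_pos ξ)
  let f : ℝ × ℝ → ℝ := fun p => Real.log ‖(⟨x 0, x 1⟩ : ℂ) - ⟨p.1, p.2⟩‖
  have hpre : Eell ξ = kvEquiv ⁻¹' kvE b := by
    ext y; simp [Eell, kvE, kvEquiv_apply, hbdef]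
  have hf : ∀ y : Pt, Real.log ‖x - y‖ = f (kvEquiv y) := by
    intro y; rw [kv_norm]; rfl
  have hint0 : IntegrableOn (fun y : Pt => Real.log ‖x - y‖) (Eell ξ) := by
    refine (kv_intOn_log x (‖x‖ + (1 + b) + 1)).mono_set ?_
    intro y hy
    have hy' : (y 0) ^ 2 + (y 1 / b) ^ 2 < 1 := hy
    rw [Metric.mem_ball, dist_eq_norm]
    have h1 : ‖y‖ ≤ 1 + b := by
      rw [EuclideanSpace.norm_eq, Real.sqrt_le_left (by positivity)]
      simp only [Fin.sum_univ_two, Real.norm_eq_abs, sq_abs]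
      have h2 : (y 1) ^ 2 = b ^ 2 * (y 1 / b) ^ 2 := by field_simp
      rw [h2]
      nlinarith [sq_nonneg (y 0), sq_nonneg (y 1 / b), sq_nonneg b]
    have := norm_sub_le y x
    linarith
  have hint1 : IntegrableOn f (kvE b) := by
    rw [← kvEquiv_mp.integrableOn_comp_preimage kvEquiv.measurableEmbedding, ← hpre]
    exact hint0.congr_fun_ae (Filter.Eventually.of_forall fun y => hf y)
  have hSm : MeasurableSet kvS := measurableSet_Ioo.prod measurableSet_Ioo
  have hd : ∀ p ∈ kvS, HasFDerivWithinAt (kvG b) ((kvD b).comp (fderivPolarCoordSymm p)) kvS p :=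
    fun p _ => (kvG_deriv b p).hasFDerivWithinAt
  have hint2 : IntegrableOn f (kvG b '' kvS) := hint1.congr_set_ae (kvG_image b hb)
  rw [integrableOn_image_iff_integrableOn_abs_det_fderiv_smul volume hSm hd (kvG_inj b hb)] at hint2
  have key : ∀ p ∈ kvS, |((kvD b).comp (fderivPolarCoordSymm p)).det| • f (kvG b p)
      = (b * p.1) * f (kvG b p) := by
    intro p hp
    rw [kvG_det, abs_of_pos (mul_pos hb hp.1.1), smul_eq_mul]
  have hint3 : IntegrableOn (fun p => (b * p.1) * f (kvG b p)) kvS :=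
    hint2.congr_fun key hSm
  calc ∫ y in Eell ξ, Real.log ‖x - y‖ = ∫ y in kvEquiv ⁻¹' kvE b, f (kvEquiv y) := by
        rw [hpre]; simp only [hf]
    _ = ∫ p in kvE b, f p :=
        kvEquiv_mp.setIntegral_preimage_emb kvEquiv.measurableEmbedding f _
    _ = ∫ p in kvG b '' kvS, f p := (setIntegral_congr_set (kvG_image b hb)).symm
    _ = ∫ p in kvS, (b * p.1) * f (kvG b p) := by
        rw [integral_image_eq_integral_abs_det_fderiv_smul volume hSm hd (kvG_inj b hb)]
        exact setIntegral_congr_fun hSm key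
    _ = _ := by
        have := setIntegral_prod (μ := volume) (ν := volume)
          (fun p : ℝ × ℝ => (b * p.1) * f (kvG b p)) (s := Set.Ioo (0:ℝ) 1)
          (t := Set.Ioo (-π) π) hint3
        exact this

/-- The principal square root `√(1 - s²/z²)`. -/
def kvh (c2 : ℝ) (z : ℂ) (r : ℝ) : ℂ := (1 - (r:ℂ) ^ 2 * c2 / z ^ 2) ^ ((2:ℕ)⁻¹ : ℂ)

lemma kvh_sq (c2 : ℝ) (z : ℂ) (r : ℝ) : kvh c2 z r ^ 2 = 1 - (r:ℂ) ^ 2 * c2 / z ^ 2 :=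
  Complex.cpow_nat_inv_pow _ two_ne_zero

lemma kvh_re (c2 : ℝ) (z : ℂ) (r : ℝ) : 0 ≤ (kvh c2 z r).re := by
  unfold kvh
  set w := (1 - (r:ℂ) ^ 2 * c2 / z ^ 2)
  by_cases hw : w = 0
  · simp [hw]
  rw [Complex.cpow_def_of_ne_zero hw, Complex.exp_re]
  refine mul_nonneg (Real.exp_pos _).le (Real.cos_nonneg_of_mem_Icc ?_)
  have h1 : (Complex.log w * ((2:ℕ)⁻¹ : ℂ)).im = Complex.arg w / 2 := by
    have : ((2:ℕ)⁻¹ : ℂ) = ((1/2 : ℝ) : ℂ) := by norm_num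
    rw [this, Complex.im_mul_ofReal, Complex.log_im]; ring
  rw [h1]
  have := Complex.neg_pi_lt_arg w
  have := Complex.arg_le_pi w
  constructor <;> linarith

/-- Joukowski inverse -/
def kvF (c2 : ℝ) (z : ℂ) (r : ℝ) : ℂ := z * (1 + kvh c2 z r) / 2

lemma kv_norm_one_sub_le (h : ℂ) (hh : 0 ≤ h.re) : ‖1 - h‖ ≤ ‖1 + h‖ := by
  rw [Complex.norm_def, Complex.norm_def]
  apply Real.sqrt_le_sqrt
  simp only [Complex.normSq_apply, Complex.sub_re, Complex.add_re, Complex.sub_im, Complex.add_im,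
    Complex.one_re, Complex.one_im]
  nlinarith

lemma kv_codisc (a : ℂ) : {z : ℂ | ‖z - a‖ ≠ 0} ∈ Filter.codiscreteWithin (Metric.sphere (0 : ℂ) |1|) := by
  apply codiscreteWithin_iff_locallyFiniteComplementWithin.2
  intro z hz
  use Set.univ
  refine ⟨Filter.univ_mem, ?_⟩
  rw [Set.univ_inter]
  apply Set.Subsingleton.finite
  rintro z₁ ⟨-, h1⟩ z₂ ⟨-, h2⟩
  simp only [ne_eq, Set.mem_ofPred_eq, not_not, norm_eq_zero, sub_eq_zero] at h1 h2
  rw [h1, h2]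

lemma kv_jensen (A : ℝ) (hA : 0 < A) (t1 t2 : ℂ) :
    circleAverage (fun t => Real.log (A * ‖t - t1‖ * ‖t - t2‖)) 0 1
      = Real.log A + Real.posLog ‖t1‖ + Real.posLog ‖t2‖ := by
  have e : circleAverage (fun t => Real.log (A * ‖t - t1‖ * ‖t - t2‖)) 0 1
    = circleAverage (fun t => (Real.log A + Real.log ‖t - t1‖) + Real.log ‖t - t2‖) 0 1 := by
    apply circleAverage_congr_codiscreteWithin _ one_ne_zero
    filter_upwards [kv_codisc t1, kv_codisc t2] with t h1 h2
    rw [Real.log_mul (mul_ne_zero hA.ne' h1) h2, Real.log_mul hA.ne' h1]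
  have i1 := circleIntegrable_log_norm_sub_const (a := t1) (c := 0) 1
  have i2 := circleIntegrable_log_norm_sub_const (a := t2) (c := 0) 1
  have i3 : CircleIntegrable (fun t => Real.log A + Real.log ‖t - t1‖) 0 1 :=
    (circleIntegrable_const _ _ _).add i1
  rw [e, circleAverage_fun_add i3 i2,
    circleAverage_fun_add (circleIntegrable_const _ _ _) i1, circleAverage_const,
    circleAverage_log_norm_sub_const_eq_posLog, circleAverage_log_norm_sub_const_eq_posLog]

lemma kv_inner (b : ℝ) (hb : 0 < b) (hb1 : b < 1) (z : ℂ) (hz : z ≠ 0) (r : ℝ) (hr : 0 < r) :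
    ∫ θ in Set.Ioo (-π) π, Real.log ‖z - ⟨r * Real.cos θ, b * (r * Real.sin θ)⟩‖
      = 2 * π * max (Real.log (r * ((1 + b) / 2))) (Real.log ‖kvF (1 - b ^ 2) z r‖) := by
  set A : ℝ := r * ((1 + b) / 2) with hA
  have hA0 : 0 < A := by positivity
  set h := kvh (1 - b ^ 2) z r with hh
  have hsq : h ^ 2 = 1 - (r:ℂ) ^ 2 * ((1 - b ^ 2 : ℝ):ℂ) / z ^ 2 := kvh_sq _ _ _
  have hre : 0 ≤ h.re := kvh_re _ _ _
  have hAc : (A : ℂ) ≠ 0 := by exact_mod_cast hA0.ne'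
  set t1 : ℂ := z * (1 + h) / (2 * A) with ht1
  set t2 : ℂ := z * (1 - h) / (2 * A) with ht2
  have hbc : (1 + (b:ℂ)) ≠ 0 := by
    have : (1 + b) ≠ 0 := by positivity
    exact_mod_cast this
  have hrc : (r:ℂ) ≠ 0 := by exact_mod_cast hr.ne'
  have hsum : t1 + t2 = z / A := by
    rw [ht1, ht2]; field_simp; ring
  have hprod : t1 * t2 = ((1 - b) / (1 + b) : ℝ) := by
    have : t1 * t2 = z ^ 2 * (1 - h ^ 2) / (4 * A ^ 2) := by
      rw [ht1, ht2]; field_simp; ring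
    rw [this, hsq, hA]
    push_cast
    field_simp
    ring
  have hle : ‖t2‖ ≤ ‖t1‖ := by
    rw [ht1, ht2, norm_div, norm_div, norm_mul z, norm_mul z]
    gcongr
    exact kv_norm_one_sub_le h hre
  have ht2le : ‖t2‖ ≤ 1 := by
    have h1 : ‖t1‖ * ‖t2‖ = (1 - b) / (1 + b) := by
      rw [← norm_mul, hprod, Complex.norm_real, Real.norm_of_nonneg]
      exact div_nonneg (by linarith) (by linarith)
    have h2 : (1 - b) / (1 + b) ≤ 1 := by
      rw [div_le_one (by linarith)]; linarith
    nlinarith [norm_nonneg t2, norm_nonneg t1]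
  have hh1 : 1 + h ≠ 0 := by
    intro h0
    have := congrArg Complex.re h0
    simp at this
    linarith
  have hcirc : ∀ θ : ℝ, Real.log ‖z - ⟨r * Real.cos θ, b * (r * Real.sin θ)⟩‖
      = Real.log (A * ‖circleMap 0 1 θ - t1‖ * ‖circleMap 0 1 θ - t2‖) := by
    intro θ
    congr 1
    set t := circleMap 0 1 θ with ht
    have htn : ‖t‖ = 1 := by simp [ht, norm_circleMap_zero]
    have ht0 : t ≠ 0 := by
      intro h0; rw [h0] at htn; simp at htn
    have htv : t = Real.cos θ + Real.sin θ * Complex.I := by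
      rw [ht, circleMap]
      simp [Complex.exp_mul_I]
    have key : t * (z - ⟨r * Real.cos θ, b * (r * Real.sin θ)⟩) = -(A * (t - t1) * (t - t2)) := by
      have e1 : (A:ℂ) * (t - t1) * (t - t2) = A * t ^ 2 - A * (t1 + t2) * t + A * (t1 * t2) := by
        ring
      have e2 : (⟨r * Real.cos θ, b * (r * Real.sin θ)⟩ : ℂ)
          = r * Real.cos θ + b * (r * Real.sin θ) * Complex.I := by
        apply Complex.ext <;> simp [-Complex.ofReal_cos, -Complex.ofReal_sin]
      have e3 : (Real.cos θ : ℂ) ^ 2 + (Real.sin θ : ℂ) ^ 2 = 1 := by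
        exact_mod_cast Real.cos_sq_add_sin_sq θ
      have e4 : (A:ℂ) * (z / A) = z := by field_simp
      have e5 : (A:ℂ) * ((1 - b) / (1 + b) : ℝ) = r * (1 - b) / 2 := by
        rw [hA]; push_cast; field_simp
      rw [e1, e2, hsum, hprod, e4, e5, htv, hA]
      simp only [Complex.ofReal_mul, Complex.ofReal_add, Complex.ofReal_div, Complex.ofReal_one,
        Complex.ofReal_ofNat]
      linear_combination (-(r * ((1:ℂ) - b) / 2)) * e3 +
        (r * (Real.sin θ : ℂ) ^ 2 * (1 - (b:ℂ)) / 2) * Complex.I_sq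
    have := congrArg norm key
    rw [norm_neg, norm_mul, norm_mul, norm_mul, htn, one_mul, Complex.norm_real,
      Real.norm_of_nonneg hA0.le] at this
    exact this
  have hJ := kv_jensen A hA0 t1 t2
  rw [circleAverage_def, smul_eq_mul] at hJ
  have hper : Function.Periodic (fun θ : ℝ => Real.log (A * ‖circleMap 0 1 θ - t1‖ * ‖circleMap 0 1 θ - t2‖)) (2 * π) := by
    intro θ
    simp only [periodic_circleMap 0 1 θ]
  have hper2 := hper.intervalIntegral_add_eq (-π) 0
  rw [show -π + 2 * π = π by ring, zero_add] at hper2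
  rw [← integral_Ioc_eq_integral_Ioo, ← intervalIntegral.integral_of_le (by linarith [Real.pi_pos])]
  simp only [hcirc]
  rw [hper2]
  have hJ2 : ∫ θ in (0:ℝ)..2 * π, Real.log (A * ‖circleMap 0 1 θ - t1‖ * ‖circleMap 0 1 θ - t2‖)
      = 2 * π * (Real.log A + Real.posLog ‖t1‖ + Real.posLog ‖t2‖) := by
    rw [← hJ]; field_simp
  rw [hJ2, (Real.posLog_eq_zero_iff ‖t2‖).2 (by rwa [abs_of_nonneg (norm_nonneg _)]), add_zero,
    Real.posLog_apply, ← max_add_add_left, add_zero]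
  have ht1pos : ‖t1‖ ≠ 0 := by
    rw [norm_ne_zero_iff, ht1]
    exact div_ne_zero (mul_ne_zero hz hh1) (mul_ne_zero two_ne_zero hAc)
  rw [← Real.log_mul hA0.ne' ht1pos]
  have hF : A * ‖t1‖ = ‖kvF (1 - b ^ 2) z r‖ := by
    rw [← Real.norm_of_nonneg hA0.le, ← Complex.norm_real, ← norm_mul, kvF, ← hh, ht1]
    congr 1
    field_simp
  rw [hF]

lemma kv_sqrt_deriv (w : ℂ) (hw : w ∈ Complex.slitPlane) :
    HasDerivAt (fun w : ℂ => w ^ ((2:ℕ)⁻¹ : ℂ)) (1 / (2 * w ^ ((2:ℕ)⁻¹ : ℂ))) w := by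
  have hd : HasDerivAt (fun w : ℂ => w ^ ((2:ℕ)⁻¹ : ℂ)) _ w := (hasDerivAt_id w).cpow_const hw
  have hd2 := hd.differentiableAt.hasDerivAt
  set D := deriv (fun w : ℂ => w ^ ((2:ℕ)⁻¹ : ℂ)) w
  have hp := hd2.pow 2
  have e : (fun w : ℂ => w ^ ((2:ℕ)⁻¹ : ℂ)) ^ 2 = id := by
    funext w
    exact Complex.cpow_nat_inv_pow w two_ne_zero
  rw [e] at hp
  have hu := hp.unique (hasDerivAt_id w)
  have hne : w ^ ((2:ℕ)⁻¹ : ℂ) ≠ 0 := by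
    intro h0
    have := Complex.cpow_nat_inv_pow w two_ne_zero
    rw [h0] at this
    exact Complex.slitPlane_ne_zero hw (by simpa using this.symm)
  have : D = 1 / (2 * w ^ ((2:ℕ)⁻¹ : ℂ)) := by
    rw [eq_div_iff (mul_ne_zero two_ne_zero hne), ← hu]
    simp
    ring
  rw [← this]
  exact hd2

/-- radicand -/
def kvW (c2 : ℝ) (z : ℂ) (r : ℝ) : ℂ := 1 - (r:ℂ) ^ 2 * c2 / z ^ 2

lemma kvh_ne (c2 : ℝ) (z : ℂ) (r : ℝ) (hW : kvW c2 z r ∈ Complex.slitPlane) :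
    kvh c2 z r ≠ 0 := by
  intro h0
  have := kvh_sq c2 z r
  rw [h0] at this
  exact Complex.slitPlane_ne_zero hW (by rw [kvW, ← this]; simp)

lemma kvh_deriv_z (c2 : ℝ) (z : ℂ) (r : ℝ) (hz : z ≠ 0) (hW : kvW c2 z r ∈ Complex.slitPlane) :
    HasDerivAt (fun z => kvh c2 z r) ((r:ℂ) ^ 2 * c2 / z ^ 3 / kvh c2 z r) z := by
  have h1 : HasDerivAt (fun z : ℂ => kvW c2 z r) (2 * ((r:ℂ) ^ 2 * c2 / z ^ 3)) z := by
    unfold kvW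
    have := ((hasDerivAt_const z ((r:ℂ) ^ 2 * c2)).fun_div (hasDerivAt_pow 2 z)
      (pow_ne_zero 2 hz)).const_sub 1
    refine this.congr_deriv ?_
    field_simp
    push_cast
    ring
  have h2 := (kv_sqrt_deriv _ hW).comp z h1
  have hne := kvh_ne c2 z r hW
  refine h2.congr_deriv ?_
  change 1 / (2 * kvh c2 z r) * _ = _
  field_simp

lemma kvh_deriv_r (c2 : ℝ) (z : ℂ) (r : ℝ) (hz : z ≠ 0) (hW : kvW c2 z r ∈ Complex.slitPlane) :
    HasDerivAt (fun r : ℝ => kvh c2 z r) (-((r:ℂ) * c2 / z ^ 2 / kvh c2 z r)) r := by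
  have h1 : HasDerivAt (fun r : ℝ => kvW c2 z r) (-(2 * ((r:ℂ) * c2 / z ^ 2))) r := by
    have h0 : HasDerivAt (fun r : ℂ => 1 - r ^ 2 * c2 / z ^ 2) (-(2 * ((r:ℂ) * c2 / z ^ 2))) r := by
      have := (((hasDerivAt_pow 2 (r:ℂ)).mul_const (c2:ℂ)).div_const (z ^ 2)).const_sub 1
      refine this.congr_deriv ?_
      push_cast
      ring
    exact h0.comp_ofReal
  have h2 := (kv_sqrt_deriv _ hW).comp r h1
  have hne := kvh_ne c2 z r hW
  refine h2.congr_deriv ?_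
  change 1 / (2 * kvh c2 z r) * _ = _
  field_simp

/-- holomorphic logarithm -/
def kvL (c2 : ℝ) (z0 z : ℂ) (r : ℝ) : ℂ := Complex.log (z / z0) + Complex.log (1 + kvh c2 z r)

lemma kv_one_add_slit (c2 : ℝ) (z : ℂ) (r : ℝ) : 1 + kvh c2 z r ∈ Complex.slitPlane := by
  left
  have := kvh_re c2 z r
  simp
  linarith

lemma kvL_deriv (c2 : ℝ) (z0 z : ℂ) (r : ℝ) (hz0 : z0 ≠ 0) (hz : z / z0 ∈ Complex.slitPlane)
    (hW : kvW c2 z r ∈ Complex.slitPlane) :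
    HasDerivAt (fun z => kvL c2 z0 z r) (1 / (z * kvh c2 z r)) z := by
  have hzne : z ≠ 0 := by
    rintro rfl
    exact Complex.slitPlane_ne_zero hz (by simp)
  have hne := kvh_ne c2 z r hW
  have h1 := ((hasDerivAt_id z).div_const z0).clog hz
  have h2 := ((kvh_deriv_z c2 z r hzne hW).const_add 1).clog (kv_one_add_slit c2 z r)
  have h3 := h1.add h2
  have hne1 := Complex.slitPlane_ne_zero (kv_one_add_slit c2 z r)
  refine h3.congr_deriv ?_
  have hsq := kvh_sq c2 z r
  have e : (r:ℂ) ^ 2 * c2 = (1 - kvh c2 z r ^ 2) * z ^ 2 := by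
    rw [hsq]; field_simp; ring
  rw [e]
  simp only [id]
  field_simp
  ring

lemma kvL_re (c2 : ℝ) (z0 z : ℂ) (r : ℝ) (hz0 : z0 ≠ 0) (hz : z ≠ 0) :
    Real.log ‖kvF c2 z r‖ = (Real.log ‖z0‖ - Real.log 2) + (kvL c2 z0 z r).re := by
  have hne1 := Complex.slitPlane_ne_zero (kv_one_add_slit c2 z r)
  rw [kvL, Complex.add_re, Complex.log_re, Complex.log_re, kvF, norm_div, norm_mul, norm_div,
    Real.log_div (by positivity) (by simp), Real.log_mul (by positivity) (by positivity),
    Real.log_div (by positivity) (by positivity)]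
  simp
  ring

/-- boundary point -/
def kvz (b η : ℝ) : ℂ := ⟨Real.cos η, b * Real.sin η⟩

lemma kvz_ne (b η : ℝ) (hb : 0 < b) : kvz b η ≠ 0 := by
  intro h
  have h1 := congrArg Complex.re h
  have h2 := congrArg Complex.im h
  simp [kvz, hb.ne'] at h1 h2
  have := Real.sin_sq_add_cos_sq η
  rw [h1, h2] at this
  simp at this

lemma kvW_slit (b η : ℝ) (hb : 0 < b) (hb1 : b < 1) (r : ℝ) (hr : r ∈ Set.Icc (0:ℝ) 1) :
    kvW (1 - b ^ 2) (kvz b η) r ∈ Complex.slitPlane := by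
  have hz := kvz_ne b η hb
  by_contra hn
  rw [Complex.mem_slitPlane_iff] at hn
  push Not at hn
  set w := kvW (1 - b ^ 2) (kvz b η) r with hw
  have e : ((r ^ 2 * (1 - b ^ 2) : ℝ) : ℂ) = (1 - w) * kvz b η ^ 2 := by
    rw [hw, kvW]; field_simp; push_cast; ring
  have hwr : w = (w.re : ℂ) := by
    apply Complex.ext <;> simp [hn.2]
  rw [hwr] at e
  have e1 := congrArg Complex.re e
  have e2 := congrArg Complex.im e
  simp [kvz, pow_two, -Complex.ofReal_mul] at e1 e2
  set s := w.re
  have hs := hn.1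
  set C := Real.cos η
  set S := Real.sin η
  have hcs : S ^ 2 + C ^ 2 = 1 := Real.sin_sq_add_cos_sq η
  have hr0 := hr.1
  have hr1 := hr.2
  have hCS : C * S = 0 := by
    rcases e2 with h | h
    · linarith
    · have : b * (C * S) = 0 := by linarith
      exact (mul_eq_zero.1 this).resolve_left hb.ne'
  have hr2 : r * r ≤ 1 := by nlinarith
  have hbb : 0 < 1 - b * b := by nlinarith
  have hrb : r * r * (1 - b * b) < 1 := by nlinarith
  have hrb0 : 0 ≤ r * r * (1 - b * b) := by positivity
  rcases mul_eq_zero.1 hCS with h | h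
  · rw [h] at e1 hcs
    have : S * S = 1 := by nlinarith
    have : (1 - s) * (b * S * (b * S)) = (1 - s) * (b * b) := by
      linear_combination (1 - s) * b * b * this
    nlinarith
  · rw [h] at e1 hcs
    have : C * C = 1 := by nlinarith
    nlinarith

lemma kvh_one (b η : ℝ) (hb : 0 < b) :
    kvh (1 - b ^ 2) (kvz b η) 1 * kvz b η = ⟨b * Real.cos η, Real.sin η⟩ := by
  have hz := kvz_ne b η hb
  set z := kvz b η with hzdef
  set w : ℂ := ⟨b * Real.cos η, Real.sin η⟩ with hw
  set h := kvh (1 - b ^ 2) z 1 with hh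
  have hsq : h ^ 2 = 1 - ((1:ℝ):ℂ) ^ 2 * ((1 - b ^ 2 : ℝ) : ℂ) / z ^ 2 := kvh_sq _ _ _
  have hre : 0 ≤ h.re := kvh_re _ _ _
  have hcs : Real.sin η ^ 2 + Real.cos η ^ 2 = 1 := Real.sin_sq_add_cos_sq η
  have hw2 : w ^ 2 = z ^ 2 - ((1 - b ^ 2 : ℝ) : ℂ) := by
    apply Complex.ext
    · simp [hw, hzdef, kvz, pow_two, -Complex.ofReal_mul]
      linear_combination (b ^ 2 - 1) * hcs
    · simp [hw, hzdef, kvz, pow_two, -Complex.ofReal_mul]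
      ring
  have h2 : (h * z) ^ 2 = w ^ 2 := by
    rw [mul_pow, hsq, hw2]; field_simp; simp
  rcases sq_eq_sq_iff_eq_or_eq_neg.1 h2 with h3 | h3
  · exact h3
  · exfalso
    have h4 : h * (z * (starRingEnd ℂ) z) = - w * (starRingEnd ℂ) z := by
      rw [← mul_assoc, h3]
    rw [Complex.mul_conj] at h4
    have h5 := congrArg Complex.re h4
    rw [Complex.re_mul_ofReal] at h5
    simp [hw, hzdef, kvz] at h5
    have h6 : 0 ≤ h.re * Complex.normSq z := mul_nonneg hre (Complex.normSq_nonneg _)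
    simp only [hzdef, kvz] at h6
    nlinarith

lemma kv_strict_aux (b r p q u v C S : ℝ) (hb : 0 < b) (hr0 : 0 < r) (hr1 : r < 1)
    (hq0 : 0 ≤ q) (hp0 : 0 < p) (hqp : q ≤ p)
    (hpq : p * q = r ^ 2 * (1 - b ^ 2)) (hple : p ≤ r * (1 + b))
    (hp2 : p ^ 2 = u ^ 2 + v ^ 2) (hcs : S ^ 2 + C ^ 2 = 1)
    (x1 : 2 * p * C = (p + q) * u) (y1 : 2 * p * b * S = (p - q) * v) : False := by
  have hqge : r * (1 - b) ≤ q := by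
    by_contra hlt
    push Not at hlt
    have : p * q < r * (1 + b) * (r * (1 - b)) := by
      nlinarith
    rw [hpq] at this
    nlinarith
  have hpq1 : p + q ≤ 2 * r := by
    have : p * (p + q) ≤ p * (2 * r) := by
      have : (p - r * (1 + b)) * (p - r * (1 - b)) ≤ 0 :=
        mul_nonpos_of_nonpos_of_nonneg (by linarith) (by linarith)
      nlinarith
    exact le_of_mul_le_mul_left this hp0
  have hpq2 : p - q ≤ 2 * r * b := by nlinarith
  have a1 : (p + q) ^ 2 ≤ (2 * r) ^ 2 := by gcongr
  have a2 : (p - q) ^ 2 ≤ (2 * r * b) ^ 2 := by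
    have : 0 ≤ p - q := by linarith
    gcongr
  have b1 : (2 * p * C) ^ 2 ≤ (2 * r) ^ 2 * u ^ 2 := by
    rw [x1, mul_pow]; gcongr
  have b2 : (2 * p * b * S) ^ 2 ≤ (2 * r * b) ^ 2 * v ^ 2 := by
    rw [y1, mul_pow]; gcongr
  have b3 : (2 * p * S) ^ 2 ≤ (2 * r) ^ 2 * v ^ 2 := by
    have hb2 : 0 < b ^ 2 := by positivity
    have : b ^ 2 * (2 * p * S) ^ 2 ≤ b ^ 2 * ((2 * r) ^ 2 * v ^ 2) := by
      calc b ^ 2 * (2 * p * S) ^ 2 = (2 * p * b * S) ^ 2 := by ring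
        _ ≤ (2 * r * b) ^ 2 * v ^ 2 := b2
        _ = _ := by ring
    exact le_of_mul_le_mul_left this hb2
  have b4 : 4 * p ^ 2 ≤ 4 * r ^ 2 * p ^ 2 := by
    have : (2 * p * S) ^ 2 + (2 * p * C) ^ 2 = 4 * p ^ 2 := by linear_combination 4 * p ^ 2 * hcs
    calc 4 * p ^ 2 = (2 * p * S) ^ 2 + (2 * p * C) ^ 2 := this.symm
      _ ≤ (2 * r) ^ 2 * v ^ 2 + (2 * r) ^ 2 * u ^ 2 := add_le_add b3 b1
      _ = 4 * r ^ 2 * (u ^ 2 + v ^ 2) := by ring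
      _ = 4 * r ^ 2 * p ^ 2 := by rw [← hp2]
  have hp2' : 0 < p ^ 2 := by positivity
  have : r ^ 2 < 1 := by nlinarith
  nlinarith

lemma kv_strict (b η : ℝ) (hb : 0 < b) (hb1 : b < 1) (r : ℝ) (hr : r ∈ Set.Ioo (0:ℝ) 1) :
    r * ((1 + b) / 2) < ‖kvF (1 - b ^ 2) (kvz b η) r‖ := by
  obtain ⟨hr0, hr1⟩ := hr
  by_contra hcon
  push Not at hcon
  have hz := kvz_ne b η hb
  set h := kvh (1 - b ^ 2) (kvz b η) r with hh
  have hsq : h ^ 2 = 1 - (r:ℂ) ^ 2 * ((1 - b ^ 2 : ℝ) : ℂ) / kvz b η ^ 2 := kvh_sq _ _ _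
  have hre : 0 ≤ h.re := kvh_re _ _ _
  set f := kvz b η * (1 + h) with hf
  set g := kvz b η * (1 - h) with hg
  have hfg : f * g = ((r ^ 2 * (1 - b ^ 2) : ℝ) : ℂ) := by
    have : f * g = kvz b η ^ 2 * (1 - h ^ 2) := by rw [hf, hg]; ring
    rw [this, hsq]; push_cast; field_simp; ring
  have hsum : f + g = 2 * kvz b η := by rw [hf, hg]; ring
  set m := r ^ 2 * (1 - b ^ 2) with hm
  have hm0 : 0 < m := by
    have : 0 < 1 - b ^ 2 := by nlinarith
    positivity
  set p := ‖f‖ with hp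
  set q := ‖g‖ with hq
  have hqp : q ≤ p := by
    rw [hp, hq, hf, hg, norm_mul, norm_mul]
    gcongr
    exact kv_norm_one_sub_le h hre
  have hpq : p * q = m := by
    rw [hp, hq, ← norm_mul, hfg, Complex.norm_real, Real.norm_of_nonneg hm0.le]
  have hp0 : 0 < p := by
    rcases (norm_nonneg f).lt_or_eq with h | h
    · exact h
    · rw [← hp] at h; rw [← h] at hpq; linarith
  have hple : p ≤ r * (1 + b) := by
    have : ‖kvF (1 - b ^ 2) (kvz b η) r‖ = p / 2 := by
      rw [kvF, ← hh, ← hf, norm_div]; simp [hp]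
    rw [this] at hcon
    linarith
  have hp2 : p ^ 2 = f.re ^ 2 + f.im ^ 2 := by
    rw [hp, ← Complex.normSq_eq_norm_sq, Complex.normSq_apply]; ring
  have hgconj : (p : ℂ) * g = q * (starRingEnd ℂ) f := by
    have hfne : f ≠ 0 := by rw [← norm_ne_zero_iff]; exact hp0.ne'
    have hpc : (p:ℂ) ≠ 0 := by exact_mod_cast hp0.ne'
    have e1 : f * (starRingEnd ℂ) f = (p:ℂ) ^ 2 := by
      rw [Complex.mul_conj, Complex.normSq_eq_norm_sq]; push_cast; rfl
    apply mul_left_cancel₀ hfne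
    have e2 : ((p * q : ℝ) : ℂ) = m := by rw [hpq]
    push_cast at e2
    calc f * (p * g) = p * (f * g) := by ring
      _ = p * (p * q) := by rw [hfg, e2]
      _ = q * (f * (starRingEnd ℂ) f) := by rw [e1]; ring
      _ = _ := by ring
  have g1 := congrArg Complex.re hgconj
  have g2 := congrArg Complex.im hgconj
  have s1 := congrArg Complex.re hsum
  have s2 := congrArg Complex.im hsum
  simp [kvz] at g1 g2 s1 s2
  have hcs := Real.sin_sq_add_cos_sq η
  set C := Real.cos η
  set S := Real.sin η
  have x1 : 2 * p * C = (p + q) * f.re := by linear_combination (-p) * s1 + g1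
  have y1 : 2 * p * b * S = (p - q) * f.im := by linear_combination (-p) * s2 + g2
  exact kv_strict_aux b r p q f.re f.im C S hb hr0 hr1 (norm_nonneg _) hp0 hqp hpq hple hp2 hcs x1 y1

/-- radial integrand -/
def kvM (b : ℝ) (z : ℂ) (r : ℝ) : ℝ :=
  r * max (Real.log (r * ((1 + b) / 2))) (Real.log ‖kvF (1 - b ^ 2) z r‖)

/-- `w ↦ (v ↦ Re (w v))` -/
def kvLam : ℂ →L[ℝ] ℂ →L[ℝ] ℝ :=
  (ContinuousLinearMap.compL ℝ ℂ ℂ ℝ Complex.reCLM).comp (ContinuousLinearMap.mul ℝ ℂ)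

lemma kvLam_apply (w v : ℂ) : kvLam w v = (w * v).re := rfl

lemma kv_logF_deriv (c2 : ℝ) (z0 : ℂ) (r : ℝ) (hz0 : z0 ≠ 0)
    (hW : kvW c2 z0 r ∈ Complex.slitPlane) :
    HasFDerivAt (fun z => Real.log ‖kvF c2 z r‖) (kvLam (1 / (z0 * kvh c2 z0 r))) z0 := by
  have h1 := kvL_deriv c2 z0 z0 r hz0 (by simp [hz0]) hW
  have h2 := h1.hasFDerivAt.restrictScalars ℝ
  have h3 := (Complex.reCLM.hasFDerivAt.comp z0 h2).const_add (Real.log ‖z0‖ - Real.log 2)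
  have h4 : HasFDerivAt (fun z => (Real.log ‖z0‖ - Real.log 2) + (kvL c2 z0 z r).re)
      (kvLam (1 / (z0 * kvh c2 z0 r))) z0 := by
    refine h3.congr_fderiv ?_
    ext v
    simp [kvLam_apply]
    ring
  refine h4.congr_of_eventuallyEq ?_
  filter_upwards [isOpen_ne.mem_nhds hz0] with z hz
  exact kvL_re c2 z0 z r hz0 hz

lemma kvh_contAt (c2 : ℝ) (z : ℂ) (r : ℝ) (hz : z ≠ 0) (hW : kvW c2 z r ∈ Complex.slitPlane) :
    ContinuousAt (fun p : ℂ × ℝ => kvh c2 p.1 p.2) (z, r) := by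
  have h1 : ContinuousAt (fun p : ℂ × ℝ => kvW c2 p.1 p.2) (z, r) := by
    unfold kvW
    have : ((z, r) : ℂ × ℝ).1 ^ 2 ≠ 0 := pow_ne_zero 2 hz
    fun_prop (disch := assumption)
  exact ContinuousAt.comp (g := fun w : ℂ => w ^ ((2:ℕ)⁻¹ : ℂ)) (f := fun p : ℂ × ℝ => kvW c2 p.1 p.2)
    (kv_sqrt_deriv _ hW).continuousAt h1

lemma kvh_meas (c2 : ℝ) (z : ℂ) : Measurable (fun r : ℝ => kvh c2 z r) := by
  unfold kvh
  fun_prop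

lemma kvM_deriv (b η : ℝ) (hb : 0 < b) (hb1 : b < 1) :
    HasFDerivAt (fun z => ∫ r in Set.Ioo (0:ℝ) 1, kvM b z r)
      (kvLam ⟨Real.cos η / (1 + b), -(Real.sin η / (1 + b))⟩) (kvz b η) := by
  set c2 : ℝ := 1 - b ^ 2 with hc2
  set z0 := kvz b η with hz0def
  have hz0 : z0 ≠ 0 := kvz_ne b η hb
  have hc2pos : 0 < c2 := by nlinarith
  have hslit : ∀ r ∈ Set.Icc (0:ℝ) 1, kvW c2 z0 r ∈ Complex.slitPlane := kvW_slit b η hb hb1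
  have hGc : ∀ r ∈ Set.Icc (0:ℝ) 1,
      ContinuousAt (fun p : ℂ × ℝ => 1 / (p.1 * kvh c2 p.1 p.2)) (z0, r) := by
    intro r hr
    refine ContinuousAt.div continuousAt_const
      (continuousAt_fst.mul (kvh_contAt c2 z0 r hz0 (hslit r hr))) ?_
    exact mul_ne_zero hz0 (kvh_ne c2 z0 r (hslit r hr))
  have hg : ContinuousOn (fun r : ℝ => 1 / (z0 * kvh c2 z0 r)) (Set.Icc 0 1) := by
    intro r hr
    have : ContinuousAt (fun r : ℝ => ((z0, r) : ℂ × ℝ)) r := by fun_prop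
    exact (ContinuousAt.comp (f := fun r : ℝ => ((z0, r) : ℂ × ℝ))
      (g := fun p : ℂ × ℝ => 1 / (p.1 * kvh c2 p.1 p.2)) (hGc r hr) this).continuousWithinAt
  obtain ⟨K, hK⟩ := isCompact_Icc.exists_bound_of_continuousOn hg
  have hK0 : 0 ≤ K := (norm_nonneg _).trans (hK 0 (by simp))
  have htube : ∀ᶠ z in nhds z0, ∀ r ∈ Set.Icc (0:ℝ) 1,
      z / z0 ∈ Complex.slitPlane ∧ kvW c2 z r ∈ Complex.slitPlane ∧
        ‖1 / (z * kvh c2 z r)‖ ≤ K + 1 := by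
    apply isCompact_Icc.eventually_forall_of_forall_eventually
      (P := fun z r => z / z0 ∈ Complex.slitPlane ∧ kvW c2 z r ∈ Complex.slitPlane ∧
        ‖1 / (z * kvh c2 z r)‖ ≤ K + 1)
    intro r hr
    have a1 : ∀ᶠ p : ℂ × ℝ in nhds (z0, r), p.1 / z0 ∈ Complex.slitPlane := by
      have : ContinuousAt (fun p : ℂ × ℝ => p.1 / z0) (z0, r) := by fun_prop
      exact this.eventually_mem (Complex.isOpen_slitPlane.mem_nhds (by simp [hz0]))
    have a2 : ∀ᶠ p : ℂ × ℝ in nhds (z0, r), kvW c2 p.1 p.2 ∈ Complex.slitPlane := by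
      have : ContinuousAt (fun p : ℂ × ℝ => kvW c2 p.1 p.2) (z0, r) := by
        unfold kvW
        have : ((z0, r) : ℂ × ℝ).1 ^ 2 ≠ 0 := pow_ne_zero 2 hz0
        fun_prop (disch := assumption)
      exact this.eventually_mem (Complex.isOpen_slitPlane.mem_nhds (hslit r hr))
    have a3 : ∀ᶠ p : ℂ × ℝ in nhds (z0, r), ‖1 / (p.1 * kvh c2 p.1 p.2)‖ < K + 1 := by
      apply (hGc r hr).norm.eventually_lt_const
      exact lt_of_le_of_lt (hK r hr) (by linarith)
    filter_upwards [a1, a2, a3] with p h1 h2 h3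
    exact ⟨h1, h2, h3.le⟩
  obtain ⟨δ, hδ, hball⟩ := Metric.eventually_nhds_iff_ball.1 htube
  have hmain := hasFDerivAt_integral_of_dominated_loc_of_lip (𝕜 := ℝ)
    (μ := volume.restrict (Set.Ioo (0:ℝ) 1)) (F := fun z r => kvM b z r) (x₀ := z0)
    (F' := fun r : ℝ => kvLam ((r:ℂ) * (1 / (z0 * kvh c2 z0 r))))
    (bound := fun _ => K + 1) (s := Metric.ball z0 δ) (Metric.ball_mem_nhds z0 hδ)
    ?_ ?_ ?_ ?_ ?_ ?_
  · have h2 := hmain.2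
    have hgi : IntegrableOn (fun r : ℝ => (r:ℂ) * (1 / (z0 * kvh c2 z0 r))) (Set.Ioo 0 1) := by
      have : ContinuousOn (fun r : ℝ => (r:ℂ) * (1 / (z0 * kvh c2 z0 r))) (Set.Icc 0 1) :=
        Complex.continuous_ofReal.continuousOn.mul hg
      exact (this.integrableOn_compact isCompact_Icc).mono_set Set.Ioo_subset_Icc_self
    rw [ContinuousLinearMap.integral_comp_comm kvLam hgi] at h2
    have hval : ∫ r in Set.Ioo (0:ℝ) 1, (r:ℂ) * (1 / (z0 * kvh c2 z0 r))
        = ⟨Real.cos η / (1 + b), -(Real.sin η / (1 + b))⟩ := by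
      have hc2c : (c2 : ℂ) ≠ 0 := by exact_mod_cast hc2pos.ne'
      rw [← integral_Ioc_eq_integral_Ioo, ← intervalIntegral.integral_of_le zero_le_one]
      have hd : ∀ r ∈ Set.uIcc (0:ℝ) 1, HasDerivAt (fun r : ℝ => -(z0 / c2) * kvh c2 z0 r)
          ((r:ℂ) * (1 / (z0 * kvh c2 z0 r))) r := by
        intro r hr
        rw [Set.uIcc_of_le zero_le_one] at hr
        have hne := kvh_ne c2 z0 r (hslit r hr)
        refine ((kvh_deriv_r c2 z0 r hz0 (hslit r hr)).const_mul (-(z0 / c2))).congr_deriv ?_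
        field_simp
      rw [intervalIntegral.integral_eq_sub_of_hasDerivAt hd]
      · have h0 : kvh c2 z0 0 = 1 := by simp [kvh]
        have h1 : kvh c2 z0 1 * z0 = ⟨b * Real.cos η, Real.sin η⟩ := kvh_one b η hb
        have e : -(z0 / c2) * kvh c2 z0 1 - -(z0 / c2) * kvh c2 z0 0
            = (z0 - kvh c2 z0 1 * z0) / c2 := by
          rw [h0]; field_simp; ring
        rw [e, h1, div_eq_iff hc2c, hz0def, kvz, hc2]
        have : 1 + b ≠ 0 := by positivity
        apply Complex.ext
        · rw [Complex.re_mul_ofReal]; simp; field_simp; ring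
        · rw [Complex.im_mul_ofReal]; simp; field_simp; ring
      · apply ContinuousOn.intervalIntegrable
        rw [Set.uIcc_of_le zero_le_one]
        exact Complex.continuous_ofReal.continuousOn.mul hg
    rw [hval] at h2
    exact h2
  · refine Filter.Eventually.of_forall fun z => ?_
    have hm : Measurable (fun r : ℝ => kvM b z r) := by
      unfold kvM kvF
      have := kvh_meas (1 - b ^ 2) z
      fun_prop
    exact hm.aestronglyMeasurable
  · have hc : ContinuousOn (fun r : ℝ => r * Real.log ‖kvF c2 z0 r‖) (Set.Icc 0 1) := by
      have hh : ContinuousOn (fun r : ℝ => kvh c2 z0 r) (Set.Icc 0 1) := fun r hr =>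
        (kvh_deriv_r c2 z0 r hz0 (hslit r hr)).continuousAt.continuousWithinAt
      refine continuousOn_id.mul (ContinuousOn.log ?_ ?_)
      · unfold kvF
        fun_prop
      · intro r _
        rw [norm_ne_zero_iff, kvF]
        exact div_ne_zero (mul_ne_zero hz0
          (Complex.slitPlane_ne_zero (kv_one_add_slit c2 z0 r))) two_ne_zero
    have hi : IntegrableOn (fun r : ℝ => r * Real.log ‖kvF c2 z0 r‖) (Set.Ioo 0 1) :=
      (hc.integrableOn_compact isCompact_Icc).mono_set Set.Ioo_subset_Icc_self
    refine hi.congr_fun ?_ measurableSet_Ioo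
    intro r hr
    have hs := kv_strict b η hb hb1 r hr
    have hA : 0 < r * ((1 + b) / 2) := mul_pos hr.1 (by positivity)
    simp only [kvM]
    rw [max_eq_right (Real.log_le_log hA hs.le)]
  · have hm : Measurable (fun r : ℝ => (r:ℂ) * (1 / (z0 * kvh c2 z0 r))) := by
      have := kvh_meas c2 z0
      fun_prop
    exact (kvLam.continuous.measurable.comp hm).aestronglyMeasurable
  · refine (ae_restrict_iff' measurableSet_Ioo).2 (Filter.Eventually.of_forall fun r hr => ?_)
    have hr' : r ∈ Set.Icc (0:ℝ) 1 := Set.Ioo_subset_Icc_self hr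
    have hLip : LipschitzOnWith (K + 1).toNNReal (fun z => kvL c2 z0 z r) (Metric.ball z0 δ) := by
      refine (convex_ball z0 δ).lipschitzOnWith_of_nnnorm_hasDerivWithin_le
        (f' := fun z => 1 / (z * kvh c2 z r)) ?_ ?_
      · intro z hz
        obtain ⟨h1, h2, h3⟩ := hball z hz r hr'
        exact (kvL_deriv c2 z0 z r hz0 h1 h2).hasDerivWithinAt
      · intro z hz
        obtain ⟨h1, h2, h3⟩ := hball z hz r hr'
        rw [← NNReal.coe_le_coe, coe_nnnorm, Real.coe_toNNReal _ (by linarith)]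
        exact h3
    refine LipschitzOnWith.of_dist_le_mul fun x hx y hy => ?_
    have hxy := hLip.dist_le_mul x hx y hy
    have hxne : ∀ z ∈ Metric.ball z0 δ, z ≠ 0 := by
      rintro z hz rfl
      obtain ⟨h1, -, -⟩ := hball 0 hz r hr'
      exact Complex.slitPlane_ne_zero h1 (by simp)
    rw [Real.coe_toNNReal _ (by linarith)] at hxy
    rw [Real.coe_nnabs, abs_of_nonneg (by linarith)]
    refine le_trans ?_ hxy
    rw [Real.dist_eq, dist_eq_norm]
    simp only [kvM]
    rw [← mul_sub, abs_mul, abs_of_pos hr.1]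
    have m1 := abs_max_sub_max_le_abs (Real.log ‖kvF c2 x r‖) (Real.log ‖kvF c2 y r‖)
      (Real.log (r * ((1 + b) / 2)))
    rw [max_comm, max_comm (Real.log ‖kvF c2 y r‖)] at m1
    have m2 : |Real.log ‖kvF c2 x r‖ - Real.log ‖kvF c2 y r‖| ≤ ‖kvL c2 z0 x r - kvL c2 z0 y r‖ := by
      rw [kvL_re c2 z0 x r hz0 (hxne x hx), kvL_re c2 z0 y r hz0 (hxne y hy), add_sub_add_left_eq_sub,
        ← Complex.sub_re]
      exact Complex.abs_re_le_norm _
    calc r * _ ≤ 1 * _ := by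
          apply mul_le_mul_of_nonneg_right hr.2.le (abs_nonneg _)
      _ ≤ _ := by rw [one_mul]; exact m1.trans m2
  · exact integrable_const _
  · refine (ae_restrict_iff' measurableSet_Ioo).2 (Filter.Eventually.of_forall fun r hr => ?_)
    have hr' : r ∈ Set.Icc (0:ℝ) 1 := Set.Ioo_subset_Icc_self hr
    have hd := kv_logF_deriv c2 z0 r hz0 (hslit r hr')
    have hs := kv_strict b η hb hb1 r hr
    have hA : 0 < r * ((1 + b) / 2) := mul_pos hr.1 (by positivity)
    have hev : ∀ᶠ z in nhds z0, Real.log (r * ((1 + b) / 2)) < Real.log ‖kvF c2 z r‖ :=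
      hd.continuousAt.eventually_const_lt (Real.log_lt_log hA hs)
    have hd2 : HasFDerivAt (fun z => r * Real.log ‖kvF c2 z r‖)
        (kvLam ((r:ℂ) * (1 / (z0 * kvh c2 z0 r)))) z0 := by
      refine (hd.const_mul r).congr_fderiv ?_
      rw [← map_smul, Complex.real_smul]
    refine hd2.congr_of_eventuallyEq ?_
    filter_upwards [hev] with z hz
    simp only [kvM]
    rw [max_eq_right hz.le]

lemma kv_tanh_pos (ξ : ℝ) (hξ : 0 < ξ) : 0 < Real.tanh ξ := by
  rw [Real.tanh_eq_sinh_div_cosh]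
  exact div_pos (Real.sinh_pos_iff.2 hξ) (Real.cosh_pos ξ)

lemma kv_psi (ξ : ℝ) (hξ : 0 < ξ) (x : Pt) (hx : (⟨x 0, x 1⟩ : ℂ) ≠ 0) :
    Ψell ξ x = Real.tanh ξ * (∫ r in Set.Ioo (0:ℝ) 1, kvM (Real.tanh ξ) ⟨x 0, x 1⟩ r)
      - Ωell ξ / 2 * ‖x‖ ^ 2 := by
  have hb := kv_tanh_pos ξ hξ
  have hb1 : Real.tanh ξ < 1 := Real.tanh_lt_one ξ
  unfold Ψell
  rw [kv_integral ξ hξ x]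
  have e : ∫ r in Set.Ioo (0:ℝ) 1, ∫ θ in Set.Ioo (-π) π, (Real.tanh ξ * r) *
        Real.log ‖(⟨x 0, x 1⟩ : ℂ) - ⟨r * Real.cos θ, Real.tanh ξ * (r * Real.sin θ)⟩‖
      = ∫ r in Set.Ioo (0:ℝ) 1, (2 * π * Real.tanh ξ) * kvM (Real.tanh ξ) ⟨x 0, x 1⟩ r := by
    refine setIntegral_congr_fun measurableSet_Ioo fun r hr => ?_
    simp only
    rw [integral_const_mul, kv_inner _ hb hb1 _ hx r hr.1, kvM]
    ring
  rw [e, integral_const_mul]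
  have := Real.pi_pos
  field_simp

/-- identification with the complex plane -/
def kvTau : Pt →L[ℝ] ℂ :=
  (Complex.equivRealProdCLM.symm : ℝ × ℝ →L[ℝ] ℂ).comp
    ((EuclideanSpace.proj (𝕜 := ℝ) (0 : Fin 2)).prod (EuclideanSpace.proj (𝕜 := ℝ) (1 : Fin 2)))

lemma kvTau_apply (x : Pt) : kvTau x = ⟨x 0, x 1⟩ := by
  apply Complex.ext <;> simp [kvTau]

lemma pt_zero (a b : ℝ) : (pt a b) 0 = a := rfl

lemma pt_one (a b : ℝ) : (pt a b) 1 = b := rfl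

lemma kvTau_pt (a b : ℝ) : kvTau (pt a b) = ⟨a, b⟩ := kvTau_apply _

/-- the derivative of the stream function -/
def kvDer (ξ η : ℝ) : Pt →L[ℝ] ℝ :=
  Real.tanh ξ • (kvLam ⟨Real.cos η / (1 + Real.tanh ξ), -(Real.sin η / (1 + Real.tanh ξ))⟩).comp kvTau
    - (Ωell ξ / 2) • (2 • innerSL ℝ (pt (Real.cos η) (Real.tanh ξ * Real.sin η)))

lemma kv_psi_deriv (ξ : ℝ) (hξ : 0 < ξ) (η : ℝ) :
    HasFDerivAt (Ψell ξ) (kvDer ξ η) (pt (Real.cos η) (Real.tanh ξ * Real.sin η)) := by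
  have hb := kv_tanh_pos ξ hξ
  have hb1 : Real.tanh ξ < 1 := Real.tanh_lt_one ξ
  set x0 := pt (Real.cos η) (Real.tanh ξ * Real.sin η) with hx0
  have ht : kvTau x0 = kvz (Real.tanh ξ) η := kvTau_pt _ _
  have h1 := kvM_deriv (Real.tanh ξ) η hb hb1
  rw [← ht] at h1
  have h2 := (h1.comp x0 kvTau.hasFDerivAt).const_mul (Real.tanh ξ)
  have h3 := ((hasStrictFDerivAt_norm_sq x0).hasFDerivAt).const_mul (Ωell ξ / 2)
  have h4 := h2.fun_sub h3
  refine HasFDerivAt.congr_of_eventuallyEq h4 ?_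
  have hne : ∀ᶠ x in nhds x0, kvTau x ≠ 0 := by
    refine kvTau.continuous.continuousAt.eventually_ne ?_
    rw [ht]
    exact kvz_ne _ η hb
  filter_upwards [hne] with x hx
  rw [kvTau_apply] at hx
  rw [kv_psi ξ hξ x hx]
  simp [kvTau_apply]

lemma kvDer_apply (ξ : ℝ) (hξ : 0 < ξ) (η : ℝ) :
    kvDer ξ η (pt (Real.tanh ξ * Real.cos η) (Real.sin η)) =
      Real.tanh ξ / (2 * Real.exp (2 * ξ)) * (Real.cosh (2 * ξ) - Real.cos (2 * η)) := by
  have hb := kv_tanh_pos ξ hξ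
  have hin : inner ℝ (pt (Real.cos η) (Real.tanh ξ * Real.sin η))
      (pt (Real.tanh ξ * Real.cos η) (Real.sin η)) = Real.tanh ξ := by
    rw [PiLp.inner_apply, Fin.sum_univ_two]
    simp only [pt_zero, pt_one, RCLike.inner_apply, conj_trivial]
    linear_combination Real.tanh ξ * Real.sin_sq_add_cos_sq η
  have e1 : kvDer ξ η (pt (Real.tanh ξ * Real.cos η) (Real.sin η)) =
      Real.tanh ξ * ((Real.cos η / (1 + Real.tanh ξ)) * (Real.tanh ξ * Real.cos η) +
        (Real.sin η / (1 + Real.tanh ξ)) * Real.sin η) - Ωell ξ / 2 * (2 * Real.tanh ξ) := by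
    simp only [kvDer, ContinuousLinearMap.sub_apply, ContinuousLinearMap.smul_apply,
      ContinuousLinearMap.comp_apply, innerSL_apply_apply, hin, kvTau_pt, kvLam_apply, Complex.mul_re]
    simp
  rw [e1, Ωell]
  have hexp : Real.exp (2 * ξ) = (Real.cosh ξ + Real.sinh ξ) ^ 2 := by
    rw [Real.cosh_add_sinh, ← Real.exp_nat_mul]; norm_num
  rw [hexp, Real.cosh_two_mul, Real.cos_two_mul', Real.tanh_eq_sinh_div_cosh]
  have hc := Real.cosh_pos ξ
  have hs := Real.sinh_pos_iff.2 hξ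
  have hcs := Real.sin_sq_add_cos_sq η
  have hch := Real.cosh_sq ξ
  set c := Real.cosh ξ
  set s := Real.sinh ξ
  have hC : Real.cos η ^ 2 = 1 - Real.sin η ^ 2 := by linarith
  have h1 : 0 < c + s := by positivity
  have e2 : 1 + s / c = (c + s) / c := by field_simp
  rw [e2]
  field_simp
  rw [hC, hch]
  linear_combination (2 * Real.sin η ^ 2) * hch

lemma kv_pos (ξ : ℝ) (hξ : 0 < ξ) :
    0 < Real.tanh ξ / (2 * Real.exp (2 * ξ)) * (Real.cosh (2 * ξ) - 1) := by
  have hb := kv_tanh_pos ξ hξ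
  have : 1 < Real.cosh (2 * ξ) := Real.one_lt_cosh.2 (by positivity)
  have : 0 < Real.cosh (2 * ξ) - 1 := by linarith
  positivity

lemma kv_le (ξ : ℝ) (hξ : 0 < ξ) (η : ℝ) :
    Real.tanh ξ / (2 * Real.exp (2 * ξ)) * (Real.cosh (2 * ξ) - 1) ≤
      Real.tanh ξ / (2 * Real.exp (2 * ξ)) * (Real.cosh (2 * ξ) - Real.cos (2 * η)) := by
  have hb := kv_tanh_pos ξ hξ
  have := Real.cos_le_one (2 * η)
  gcongr

lemma pt_decomp (a b : ℝ) : pt a b = a • pt 1 0 + b • pt 0 1 := by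
  ext i
  fin_cases i
  · change a = a * 1 + b * 0
    ring
  · change b = a * 0 + b * 1
    ring

lemma ept_self (ξ η : ℝ) : ept ξ ξ η = pt (Real.cos η) (Real.tanh ξ * Real.sin η) := by
  have := (Real.cosh_pos ξ).ne'
  rw [ept, Real.tanh_eq_sinh_div_cosh]
  congr 1 <;> field_simp

lemma ept_deriv (ξ η : ℝ) :
    HasDerivAt (fun ζ => ept ξ ζ η) (pt (Real.tanh ξ * Real.cos η) (Real.sin η)) ξ := by
  have hc := (Real.cosh_pos ξ).ne'
  have h1 := (((Real.hasDerivAt_cosh ξ).const_mul (Real.cosh ξ)⁻¹).mul_const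
    (Real.cos η)).smul_const (pt 1 0)
  have h2 := (((Real.hasDerivAt_sinh ξ).const_mul (Real.cosh ξ)⁻¹).mul_const
    (Real.sin η)).smul_const (pt 0 1)
  have h3 := h1.fun_add h2
  have e : (fun ζ => ept ξ ζ η) = fun ζ =>
      ((Real.cosh ξ)⁻¹ * Real.cosh ζ * Real.cos η) • pt 1 0 +
        ((Real.cosh ξ)⁻¹ * Real.sinh ζ * Real.sin η) • pt 0 1 := by
    funext ζ
    rw [ept, pt_decomp]
  rw [e]
  refine h3.congr_deriv ?_
  rw [← pt_decomp, Real.tanh_eq_sinh_div_cosh]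
  congr 1 <;> field_simp

lemma kv_frontier (ξ : ℝ) (hξ : 0 < ξ) (x : Pt) (hx : x ∈ frontier (Eell ξ)) :
    ∃ η : ℝ, x = pt (Real.cos η) (Real.tanh ξ * Real.sin η) := by
  have hb := kv_tanh_pos ξ hξ
  have h0 : (x 0) ^ 2 + (x 1 / Real.tanh ξ) ^ 2 = 1 := by
    have := frontier_lt_subset_eq (f := fun x : Pt => (x 0) ^ 2 + (x 1 / Real.tanh ξ) ^ 2)
      (g := fun _ => (1:ℝ)) (by fun_prop) (by fun_prop)
    exact this hx
  set w : ℂ := ⟨x 0, x 1 / Real.tanh ξ⟩ with hw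
  have hn : ‖w‖ = 1 := by
    rw [Complex.norm_def, Complex.normSq_apply, hw]
    simp only
    rw [← sq, ← sq, h0, Real.sqrt_one]
  have hwne : w ≠ 0 := by
    rw [← norm_ne_zero_iff, hn]; exact one_ne_zero
  refine ⟨Complex.arg w, ?_⟩
  rw [Complex.cos_arg hwne, Complex.sin_arg, hn]
  ext i
  fin_cases i
  · change x 0 = w.re / 1
    simp [hw]
  · change x 1 = Real.tanh ξ * (w.im / 1)
    simp only [hw]
    field_simp


/-- **Normal derivative of the Kirchhoff stream function** (Lemma on stream
functions for Kirchhoff vortices, item 3). -/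
theorem kirchhoff_stream_function_normal_derivative (ξ : ℝ) (hξ : 0 < ξ) :
    (∀ η : ℝ,
      HasDerivAt (fun ζ : ℝ => Ψell ξ (ept ξ ζ η))
        (Real.tanh ξ / (2 * Real.exp (2 * ξ)) * (Real.cosh (2 * ξ) - Real.cos (2 * η))) ξ ∧
      0 < Real.tanh ξ / (2 * Real.exp (2 * ξ)) * (Real.cosh (2 * ξ) - Real.cos (2 * η))) ∧
    ∃ ε : ℝ, 0 < ε ∧ ∀ x ∈ frontier (Eell ξ), ε ≤ ‖gradient (Ψell ξ) x‖ := by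
  refine ⟨fun η => ⟨?_, lt_of_lt_of_le (kv_pos ξ hξ) (kv_le ξ hξ η)⟩,
    _, kv_pos ξ hξ, fun x hx => ?_⟩
  · have h1 := kv_psi_deriv ξ hξ η
    rw [← ept_self] at h1
    have h2 := h1.comp_hasDerivAt ξ (ept_deriv ξ η)
    rw [kvDer_apply ξ hξ η] at h2
    exact h2
  · obtain ⟨η, rfl⟩ := kv_frontier ξ hξ x hx
    refine (kv_le ξ hξ η).trans ?_
    rw [← kvDer_apply ξ hξ η]
    have hg : ‖gradient (Ψell ξ) (pt (Real.cos η) (Real.tanh ξ * Real.sin η))‖ = ‖kvDer ξ η‖ := by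
      rw [gradient, (kv_psi_deriv ξ hξ η).fderiv, LinearIsometryEquiv.norm_map]
    rw [hg]
    have hv : ‖pt (Real.tanh ξ * Real.cos η) (Real.sin η)‖ ≤ 1 := by
      rw [EuclideanSpace.norm_eq, Fin.sum_univ_two, pt_zero, pt_one]
      refine Real.sqrt_le_iff.2 ⟨zero_le_one, ?_⟩
      simp only [Real.norm_eq_abs, sq_abs, mul_pow, one_pow]
      have hb := kv_tanh_pos ξ hξ
      have hb1 : Real.tanh ξ < 1 := Real.tanh_lt_one ξ
      have : Real.tanh ξ ^ 2 ≤ 1 := by nlinarith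
      nlinarith [Real.sin_sq_add_cos_sq η, sq_nonneg (Real.cos η)]
    exact (le_abs_self _).trans (((kvDer ξ η).le_opNorm _).trans
      (mul_le_of_le_one_right (norm_nonneg _) hv))
end
end
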